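/- arXiv:1901.01719 — 3 statements merged into one kernel-verified Lean document; each statement's English description precedes it below -/
import Mathlib

section
/- Let D_n be the number of descents of a uniformly random permutation of S_n. There exists a constant C > 0 such that for all n ≥ 1, sup over x ∈ ℝ of | P( (D_n − (n−1)/2) / sqrt((n+1)/12) ≤ x ) − Φ(x) | ≤ C / sqrt(n), where Φ is the cumulative distribution function of the standard normal distribution. -/
open Finset

/-- The value of `π` at (0-indexed) position `j`, or `0` if `j` is out of range. -/
def permVal {n : ℕ} (π : Equiv.Perm (Fin n)) (j : ℕ) : ℕ :=
  if h : j < n then (π ⟨j, h⟩ : ℕ) else 0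

/-- The number of descents of a permutation of `n` elements: the number of positions
`i` (0-indexed, `i < n - 1`) with `π i > π (i+1)`. -/
def des {n : ℕ} (π : Equiv.Perm (Fin n)) : ℕ :=
  ((Finset.range (n - 1)).filter (fun i => permVal π (i + 1) < permVal π i)).card

/-- The standard normal cumulative distribution function
`Φ(x) = ∫_{-∞}^x (1/√(2π)) e^{-t²/2} dt`. -/
noncomputable def stdNormalCDF (x : ℝ) : ℝ :=
  ∫ t in Set.Iic x, (1 / Real.sqrt (2 * Real.pi)) * Real.exp (-t ^ 2 / 2)


noncomputable def avgA (f : ℝ → ℝ) (x : ℝ) : ℝ := ∫ u in (0:ℝ)..1, f (x + u)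
noncomputable def avgB (f : ℝ → ℝ) (x : ℝ) : ℝ := ∫ u in (0:ℝ)..1, 6 * u * (1 - u) * f (x + u)

lemma avgA_cont {f : ℝ → ℝ} (hf : Continuous f) : Continuous (avgA f) := by
  unfold avgA
  exact intervalIntegral.continuous_parametric_intervalIntegral_of_continuous' (by fun_prop) _ _

lemma avgB_cont {f : ℝ → ℝ} (hf : Continuous f) : Continuous (avgB f) := by
  unfold avgB
  exact intervalIntegral.continuous_parametric_intervalIntegral_of_continuous' (by fun_prop) _ _

lemma iter_cont {f : ℝ → ℝ} (hf : Continuous f) (n : ℕ) : Continuous (avgA^[n] f) := by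
  induction n with
  | zero => simpa
  | succ n ih => rw [Function.iterate_succ_apply']; exact avgA_cont ih

lemma avgA_mono {f g : ℝ → ℝ} (hf : Continuous f) (hg : Continuous g) (h : ∀ x, f x ≤ g x) (x : ℝ) :
    avgA f x ≤ avgA g x := by
  unfold avgA
  apply intervalIntegral.integral_mono_on (by norm_num)
  · exact (Continuous.intervalIntegrable (by fun_prop) _ _)
  · exact (Continuous.intervalIntegrable (by fun_prop) _ _)
  · intro u _; exact h _

lemma iter_mono {f g : ℝ → ℝ} (hf : Continuous f) (hg : Continuous g) (h : ∀ x, f x ≤ g x) (n : ℕ) (x : ℝ) :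
    avgA^[n] f x ≤ avgA^[n] g x := by
  induction n generalizing x with
  | zero => simpa using h x
  | succ n ih =>
    rw [Function.iterate_succ_apply', Function.iterate_succ_apply']
    exact avgA_mono (iter_cont hf n) (iter_cont hg n) ih x

lemma avgA_lin {f g : ℝ → ℝ} (hf : Continuous f) (hg : Continuous g) (a b : ℝ) :
    avgA (fun y => a * f y + b * g y) = fun x => a * avgA f x + b * avgA g x := by
  funext x
  unfold avgA
  rw [intervalIntegral.integral_add (Continuous.intervalIntegrable (by fun_prop) _ _)
    (Continuous.intervalIntegrable (by fun_prop) _ _), intervalIntegral.integral_const_mul,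
    intervalIntegral.integral_const_mul]

lemma avgB_lin {f g : ℝ → ℝ} (hf : Continuous f) (hg : Continuous g) (a b : ℝ) :
    avgB (fun y => a * f y + b * g y) = fun x => a * avgB f x + b * avgB g x := by
  funext x
  unfold avgB
  rw [← intervalIntegral.integral_const_mul, ← intervalIntegral.integral_const_mul,
    ← intervalIntegral.integral_add (Continuous.intervalIntegrable (by fun_prop) _ _)
    (Continuous.intervalIntegrable (by fun_prop) _ _)]
  congr 1; funext u; ring

lemma iter_lin {f g : ℝ → ℝ} (hf : Continuous f) (hg : Continuous g) (a b : ℝ) (n : ℕ) :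
    avgA^[n] (fun y => a * f y + b * g y) = fun x => a * avgA^[n] f x + b * avgA^[n] g x := by
  induction n with
  | zero => rfl
  | succ n ih =>
    simp only [Function.iterate_succ_apply']
    rw [ih, avgA_lin (iter_cont hf n) (iter_cont hg n)]

lemma avgA_const (c : ℝ) : avgA (fun _ => c) = fun _ => c := by
  funext x; simp [avgA]

lemma avgB_const (c : ℝ) : avgB (fun _ => c) = fun _ => c := by
  funext x
  unfold avgB
  have : ∀ u : ℝ, HasDerivAt (fun u : ℝ => c * (3 * u ^ 2 - 2 * u ^ 3)) (6 * u * (1 - u) * c) u := by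
    intro u
    have := (((hasDerivAt_pow 2 u).const_mul 3).sub ((hasDerivAt_pow 3 u).const_mul 2)).const_mul c
    exact this.congr_deriv (by norm_num; ring)
  rw [intervalIntegral.integral_eq_sub_of_hasDerivAt (fun u _ => this u)
    (Continuous.intervalIntegrable (by fun_prop) _ _)]
  ring

lemma iter_const (c : ℝ) (n : ℕ) : avgA^[n] (fun _ => c) = fun _ => c := by
  induction n with
  | zero => rfl
  | succ n ih => rw [Function.iterate_succ_apply', ih, avgA_const]

/-- `avgB f x` is bounded by bounds of `f` on `[x, x+1]`. -/
lemma avgB_le {f : ℝ → ℝ} (hf : Continuous f) (c x : ℝ) (h : ∀ u ∈ Set.Icc (0:ℝ) 1, f (x + u) ≤ c) :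
    avgB f x ≤ c := by
  calc avgB f x ≤ avgB (fun _ => c) x := by
        unfold avgB
        apply intervalIntegral.integral_mono_on (by norm_num)
        · exact (Continuous.intervalIntegrable (by fun_prop) _ _)
        · exact (Continuous.intervalIntegrable (by fun_prop) _ _)
        · intro u hu
          have := hu.1
          have := hu.2
          have h3 : 0 ≤ 6 * u * (1 - u) := mul_nonneg (by linarith) (by linarith)
          exact mul_le_mul_of_nonneg_left (h u hu) h3
    _ = c := by rw [avgB_const]

lemma avgB_ge {f : ℝ → ℝ} (hf : Continuous f) (c x : ℝ) (h : ∀ u ∈ Set.Icc (0:ℝ) 1, c ≤ f (x + u)) :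
    c ≤ avgB f x := by
  calc c = avgB (fun _ => c) x := by rw [avgB_const]
    _ ≤ avgB f x := by
        unfold avgB
        apply intervalIntegral.integral_mono_on (by norm_num)
        · exact (Continuous.intervalIntegrable (by fun_prop) _ _)
        · exact (Continuous.intervalIntegrable (by fun_prop) _ _)
        · intro u hu
          have := hu.1
          have := hu.2
          have h3 : 0 ≤ 6 * u * (1 - u) := mul_nonneg (by linarith) (by linarith)
          exact mul_le_mul_of_nonneg_left (h u hu) h3

lemma avgA_le {f : ℝ → ℝ} (hf : Continuous f) (c x : ℝ) (h : ∀ u ∈ Set.Icc (0:ℝ) 1, f (x + u) ≤ c) :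
    avgA f x ≤ c := by
  calc avgA f x ≤ avgA (fun _ => c) x := by
        unfold avgA
        apply intervalIntegral.integral_mono_on (by norm_num)
        · exact (Continuous.intervalIntegrable (by fun_prop) _ _)
        · exact (Continuous.intervalIntegrable (by fun_prop) _ _)
        · intro u hu
          exact h u hu
    _ = c := by rw [avgA_const]

lemma avgA_ge {f : ℝ → ℝ} (hf : Continuous f) (c x : ℝ) (h : ∀ u ∈ Set.Icc (0:ℝ) 1, c ≤ f (x + u)) :
    c ≤ avgA f x := by
  calc c = avgA (fun _ => c) x := by rw [avgA_const]
    _ ≤ avgA f x := by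
        unfold avgA
        apply intervalIntegral.integral_mono_on (by norm_num)
        · exact (Continuous.intervalIntegrable (by fun_prop) _ _)
        · exact (Continuous.intervalIntegrable (by fun_prop) _ _)
        · intro u hu
          exact h u hu

lemma avg_comm {f : ℝ → ℝ} (hf : Continuous f) : avgA (avgB f) = avgB (avgA f) := by
  funext x
  simp only [avgA, avgB]
  simp only [← intervalIntegral.integral_const_mul]
  simp only [intervalIntegral.integral_of_le zero_le_one]
  rw [MeasureTheory.integral_integral_swap]
  · congr 1; funext u; congr 1; funext v; ring_nf
  · rw [MeasureTheory.Measure.prod_restrict]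
    have hc : Continuous (Function.uncurry fun u v : ℝ => 6 * v * (1 - v) * f (x + u + v)) := by
      unfold Function.uncurry
      fun_prop
    exact (hc.continuousOn.integrableOn_compact (isCompact_Icc.prod isCompact_Icc)).mono_set
      (Set.prod_mono Set.Ioc_subset_Icc_self Set.Ioc_subset_Icc_self)

lemma iter_avgB {f : ℝ → ℝ} (hf : Continuous f) (n : ℕ) : avgA^[n] (avgB f) = avgB (avgA^[n] f) := by
  induction n with
  | zero => rfl
  | succ n ih => rw [Function.iterate_succ_apply', ih, Function.iterate_succ_apply', avg_comm (iter_cont hf n)]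

lemma avgA_deriv {f g : ℝ → ℝ} (hg : Continuous g) (h : ∀ x, HasDerivAt f (g x) x) (x : ℝ) :
    HasDerivAt (avgA f) (avgA g x) x := by
  have hf : Continuous f := continuous_iff_continuousAt.2 fun x => (h x).continuousAt
  have e : avgA f = fun x => (∫ t in (0:ℝ)..(x+1), f t) - ∫ t in (0:ℝ)..x, f t := by
    funext x
    unfold avgA
    rw [intervalIntegral.integral_comp_add_left (fun t => f t), add_zero,
      intervalIntegral.integral_interval_sub_left (hf.intervalIntegrable _ _) (hf.intervalIntegrable _ _)]
  have e2 : avgA g x = f (x + 1) - f x := by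
    unfold avgA
    rw [intervalIntegral.integral_comp_add_left (fun t => g t), add_zero]
    exact intervalIntegral.integral_eq_sub_of_hasDerivAt (fun u _ => h u) (hg.intervalIntegrable _ _)
  rw [e, e2]
  have h1 := (hf.integral_hasStrictDerivAt 0 x).hasDerivAt
  have h2 := (hf.integral_hasStrictDerivAt 0 (x+1)).hasDerivAt.comp_add_const x 1
  exact h2.sub h1

lemma iter_deriv {f g : ℝ → ℝ} (hg : Continuous g) (h : ∀ x, HasDerivAt f (g x) x) (n : ℕ) (x : ℝ) :
    HasDerivAt (avgA^[n] f) (avgA^[n] g x) x := by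
  induction n generalizing x with
  | zero => exact h x
  | succ n ih =>
    rw [Function.iterate_succ_apply', Function.iterate_succ_apply']
    exact avgA_deriv (iter_cont hg n) ih x

lemma parts {f g : ℝ → ℝ} (hg : Continuous g) (h : ∀ x, HasDerivAt f (g x) x) (x : ℝ) :
    ∫ v in (0:ℝ)..1, (v - 1 / 2) * f (x + v) = avgB g x / 12 := by
  have hf : Continuous f := continuous_iff_continuousAt.2 fun x => (h x).continuousAt
  have hd : ∀ v : ℝ, HasDerivAt (fun v : ℝ => v * (1 - v) / 2 * f (x + v))
      (6 * v * (1 - v) * g (x + v) / 12 - (v - 1 / 2) * f (x + v)) v := by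
    intro v
    have h1 : HasDerivAt (fun v : ℝ => v * (1 - v) / 2) (1/2 - v) v := by
      have := (((hasDerivAt_id v).mul ((hasDerivAt_id v).const_sub 1))).div_const 2
      exact this.congr_deriv (by simp; ring)
    have h2 := (h (x + v)).comp_const_add x v
    exact (h1.mul h2).congr_deriv (by ring)
  have := intervalIntegral.integral_eq_sub_of_hasDerivAt (a := 0) (b := 1) (fun u _ => hd u)
    (Continuous.intervalIntegrable (by fun_prop) _ _)
  rw [intervalIntegral.integral_sub (Continuous.intervalIntegrable (by fun_prop) _ _)
    (Continuous.intervalIntegrable (by fun_prop) _ _), intervalIntegral.integral_div] at this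
  unfold avgB
  norm_num at this
  linarith

lemma key {f g : ℝ → ℝ} (hg : Continuous g) (h : ∀ x, HasDerivAt f (g x) x) (n : ℕ) (x : ℝ) :
    avgA^[n+1] (fun y => (y - x - ((n:ℝ)+1) / 2) * f y) x = ((n:ℝ)+1) / 12 * avgA^[n] (avgB g) x := by
  have hf : Continuous f := continuous_iff_continuousAt.2 fun x => (h x).continuousAt
  induction n generalizing x with
  | zero =>
    have := parts hg h x
    simp only [zero_add, Function.iterate_one, Function.iterate_zero, id]
    unfold avgA
    calc _ = ∫ v in (0:ℝ)..1, (v - 1 / 2) * f (x + v) := by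
          congr 1; funext v; push_cast; ring
      _ = _ := by rw [this]; push_cast; ring
  | succ n ih =>
    rw [Function.iterate_succ_apply']
    have e : ∀ v : ℝ, avgA^[n+1] (fun y => (y - x - (((n+1:ℕ):ℝ)+1) / 2) * f y) (x + v)
        = ((n:ℝ)+1) / 12 * avgA^[n] (avgB g) (x + v) + (v - 1/2) * avgA^[n+1] f (x + v) := by
      intro v
      rw [← ih (x + v)]
      have := congrFun (iter_lin (f := fun y => (y - (x + v) - ((n:ℝ)+1) / 2) * f y) (g := f)
        (by fun_prop) hf 1 (v - 1/2) (n+1)) (x + v)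
      rw [one_mul] at this
      rw [← this]
      refine congrArg (fun F : ℝ → ℝ => avgA^[n+1] F (x + v)) ?_
      funext y; push_cast; ring
    have c1 := iter_cont (avgB_cont hg) n
    have c2 := iter_cont hf (n+1)
    unfold avgA at e ⊢
    simp only [e]
    rw [intervalIntegral.integral_add (Continuous.intervalIntegrable (by fun_prop) _ _)
      (Continuous.intervalIntegrable (by fun_prop) _ _), intervalIntegral.integral_const_mul]
    have p := parts (iter_cont hg (n+1)) (iter_deriv hg h (n+1)) x
    rw [← iter_avgB hg] at p
    unfold avgA at p
    rw [p, Function.iterate_succ_apply']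
    push_cast; ring

lemma iter_sq (a : ℝ) (n : ℕ) : avgA^[n] (fun y => (y - a)^2) = fun x => (x + n/2 - a)^2 + n/12 := by
  induction n with
  | zero => funext x; simp
  | succ n ih =>
    rw [Function.iterate_succ_apply', ih]
    funext x
    unfold avgA
    have hd : ∀ v : ℝ, HasDerivAt (fun v : ℝ => (x + v + n/2 - a)^3/3 + n/12 * v)
        ((x + v + n/2 - a)^2 + n/12) v := by
      intro v
      have h1 : HasDerivAt (fun v : ℝ => x + v + n/2 - a) 1 v := by
        exact (((hasDerivAt_id v).const_add x).add_const _).sub_const _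
      exact (((h1.pow 3).div_const 3).add ((hasDerivAt_id v).const_mul ((n:ℝ)/12))).congr_deriv (by simp)
    rw [intervalIntegral.integral_eq_sub_of_hasDerivAt (a := 0) (b := 1) (fun u _ => hd u)
      (Continuous.intervalIntegrable (by fun_prop) _ _)]
    push_cast; ring

noncomputable def gE (t : ℝ) : ℝ := Real.exp (-t ^ 2 / 2)

lemma gE_cont : Continuous gE := by unfold gE; fun_prop
lemma gE_pos (t : ℝ) : 0 < gE t := Real.exp_pos _
lemma gE_le_one (t : ℝ) : gE t ≤ 1 := by
  unfold gE; rw [Real.exp_le_one_iff]; nlinarith [sq_nonneg t]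
lemma gE_neg (t : ℝ) : gE (-t) = gE t := by simp [gE]

lemma gE_int : MeasureTheory.Integrable gE := by
  have := integrable_exp_neg_mul_sq (b := 1/2) (by norm_num)
  refine this.congr (Filter.Eventually.of_forall fun t => ?_)
  simp only [gE]; congr 1; ring

lemma gE_total : ∫ t, gE t = √(2 * Real.pi) := by
  have := integral_gaussian (1/2)
  rw [show (√(2 * Real.pi)) = √(Real.pi / (1/2)) by congr 1; ring, ← this]
  congr 1; funext t; simp only [gE]; congr 1; ring

lemma mills1 {w : ℝ} (hw : w ≤ 0) : ∫ t in Set.Iic w, gE t ≤ √(2 * Real.pi) * gE w := by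
  have hi : MeasureTheory.Integrable (fun t => gE (t - w) * gE w) := (gE_int.comp_sub_right w).mul_const _
  calc ∫ t in Set.Iic w, gE t ≤ ∫ t in Set.Iic w, gE (t - w) * gE w := by
        apply MeasureTheory.setIntegral_mono_on gE_int.integrableOn hi.integrableOn measurableSet_Iic
        intro t ht
        simp only [gE]
        rw [← Real.exp_add, Real.exp_le_exp]
        have : t ≤ w := ht
        nlinarith [mul_nonneg_of_nonpos_of_nonpos hw (sub_nonpos.2 this)]
    _ ≤ ∫ t, gE (t - w) * gE w := by
        apply MeasureTheory.setIntegral_le_integral hi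
        exact Filter.Eventually.of_forall fun t => (mul_pos (gE_pos _) (gE_pos _)).le
    _ = _ := by
        rw [MeasureTheory.integral_mul_const, MeasureTheory.integral_sub_right_eq_self gE w, gE_total]

lemma gE_deriv (t : ℝ) : HasDerivAt gE (-t * gE t) t := by
  have h1 : HasDerivAt (fun t : ℝ => -t ^ 2 / 2) (-t) t := by
    exact (((hasDerivAt_pow 2 t).neg).div_const 2).congr_deriv (by simp; ring)
  exact h1.exp.congr_deriv (by simp only [gE]; ring)

lemma tgE_int : MeasureTheory.Integrable (fun t => -t * gE t) := by
  have := (integrable_mul_exp_neg_mul_sq (b := 1/2) (by norm_num)).neg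
  refine this.congr (Filter.Eventually.of_forall fun t => ?_)
  simp only [gE, Pi.neg_apply, neg_mul]; congr 3; ring

lemma gE_tendsto : Filter.Tendsto gE Filter.atBot (nhds 0) := by
  unfold gE
  apply Real.tendsto_exp_atBot.comp
  have h1 : Filter.Tendsto (fun t : ℝ => t * t) Filter.atBot Filter.atTop :=
    Filter.tendsto_id.atBot_mul_atBot₀ Filter.tendsto_id
  have h2 := h1.const_mul_atTop_of_neg (r := -1/2) (by norm_num)
  refine h2.congr fun t => by ring

lemma mills2 {w : ℝ} : -w * ∫ t in Set.Iic w, gE t ≤ gE w := by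
  calc -w * ∫ t in Set.Iic w, gE t = ∫ t in Set.Iic w, -w * gE t := by
        rw [MeasureTheory.integral_const_mul]
    _ ≤ ∫ t in Set.Iic w, -t * gE t := by
        apply MeasureTheory.setIntegral_mono_on (gE_int.const_mul _).integrableOn tgE_int.integrableOn measurableSet_Iic
        intro t ht
        have : t ≤ w := ht
        exact mul_le_mul_of_nonneg_right (by linarith) (gE_pos t).le
    _ = gE w - 0 :=
        MeasureTheory.integral_Iic_of_hasDerivAt_of_tendsto' (fun t _ => gE_deriv t) tgE_int.integrableOn gE_tendsto
    _ = _ := sub_zero _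

lemma I_bound_neg {q : ℝ → ℝ} (hb : ∀ t, |q t| ≤ gE t) (w : ℝ) :
    |∫ t in Set.Iic w, q t| ≤ ∫ t in Set.Iic w, gE t := by
  rw [← Real.norm_eq_abs]
  exact MeasureTheory.norm_integral_le_of_norm_le gE_int.integrableOn (Filter.Eventually.of_forall fun t => hb t)

lemma I_bound {q : ℝ → ℝ} (hq : Continuous q) (hb : ∀ t, |q t| ≤ gE t) (h0 : ∫ t, q t = 0) (w : ℝ) :
    |∫ t in Set.Iic w, q t| ≤ √(2 * Real.pi) * gE w ∧ |w| * |∫ t in Set.Iic w, q t| ≤ gE w := by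
  have hint : MeasureTheory.Integrable q :=
    gE_int.mono' hq.aestronglyMeasurable (Filter.Eventually.of_forall fun t => hb t)
  have main : ∀ v : ℝ, v ≤ 0 → ∀ r : ℝ → ℝ, (∀ t, |r t| ≤ gE t) →
      |∫ t in Set.Iic v, r t| ≤ √(2 * Real.pi) * gE v ∧ |v| * |∫ t in Set.Iic v, r t| ≤ gE v := by
    intro v hv r hr
    have := I_bound_neg hr v
    refine ⟨this.trans (mills1 hv), ?_⟩
    rw [abs_of_nonpos hv]
    exact (mul_le_mul_of_nonneg_left this (by linarith)).trans mills2
  rcases le_total w 0 with hw | hw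
  · exact main w hw q hb
  · have h1 := main (-w) (by linarith) (fun t => q (-t)) (fun t => by rw [← gE_neg]; exact hb _)
    have e : ∫ t in Set.Iic w, q t = - ∫ t in Set.Iic (-w), q (-t) := by
      have := intervalIntegral.integral_Iic_add_Ioi (b := w) hint.integrableOn hint.integrableOn
      rw [h0] at this
      rw [integral_comp_neg_Iic, neg_neg]
      linarith
    rw [e, abs_neg]
    rw [gE_neg, abs_neg] at h1
    exact h1

noncomputable def steinN (h : ℝ → ℝ) : ℝ := ∫ t, h t * (1 / √(2 * Real.pi) * gE t)

lemma sqrt_two_pi_pos : 0 < √(2 * Real.pi) := Real.sqrt_pos.2 (by positivity)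

lemma phi_int : MeasureTheory.Integrable (fun t => 1 / √(2 * Real.pi) * gE t) := gE_int.const_mul _

lemma phi_total : ∫ t, 1 / √(2 * Real.pi) * gE t = 1 := by
  rw [MeasureTheory.integral_const_mul, gE_total]
  field_simp [sqrt_two_pi_pos.ne']

lemma hphi_int {h : ℝ → ℝ} (hm : Measurable h) (h0 : ∀ t, 0 ≤ h t) (h1 : ∀ t, h t ≤ 1) :
    MeasureTheory.Integrable (fun t => h t * (1 / √(2 * Real.pi) * gE t)) := by
  refine phi_int.mono' (hm.mul (gE_cont.measurable.const_mul _)).aestronglyMeasurable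
    (Filter.Eventually.of_forall fun t => ?_)
  have := gE_pos t
  have := sqrt_two_pi_pos
  rw [Real.norm_eq_abs, abs_of_nonneg (mul_nonneg (h0 t) (by positivity))]
  exact mul_le_of_le_one_left (by positivity) (h1 t)

lemma steinN_mem {h : ℝ → ℝ} (hc : Continuous h) (h0 : ∀ t, 0 ≤ h t) (h1 : ∀ t, h t ≤ 1) :
    0 ≤ steinN h ∧ steinN h ≤ 1 := by
  have hp : ∀ t, 0 ≤ 1 / √(2 * Real.pi) * gE t := fun t =>
    mul_nonneg (by positivity) (gE_pos t).le
  constructor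
  · exact MeasureTheory.integral_nonneg fun t => mul_nonneg (h0 t) (hp t)
  · rw [← phi_total]
    exact MeasureTheory.integral_mono (hphi_int hc.measurable h0 h1) phi_int
      fun t => mul_le_of_le_one_left (hp t) (h1 t)

/-- Existence of the Stein solution with bounds. -/
lemma stein_exists {h : ℝ → ℝ} (hc : Continuous h) (h0 : ∀ t, 0 ≤ h t) (h1 : ∀ t, h t ≤ 1) :
    ∃ f : ℝ → ℝ, (∀ w, HasDerivAt f (w * f w + h w - steinN h) w) ∧
      (∀ w, |f w| ≤ √(2 * Real.pi)) ∧ (∀ w, |w * f w| ≤ 1) ∧ (∀ w, |h w - steinN h| ≤ 1) := by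
  obtain ⟨n0, n1⟩ := steinN_mem hc h0 h1
  have hd : ∀ w, |h w - steinN h| ≤ 1 := fun w => by
    rw [abs_le]; constructor <;> linarith [h0 w, h1 w]
  set q : ℝ → ℝ := fun t => (h t - steinN h) * gE t with hq
  have qc : Continuous q := by have := gE_cont; fun_prop
  have qb : ∀ t, |q t| ≤ gE t := fun t => by
    rw [hq]; simp only [abs_mul, abs_of_pos (gE_pos t)]
    exact mul_le_of_le_one_left (gE_pos t).le (hd t)
  have qint : MeasureTheory.Integrable q :=
    gE_int.mono' qc.aestronglyMeasurable (Filter.Eventually.of_forall fun t => qb t)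
  have q0 : ∫ t, q t = 0 := by
    have e : q = fun t => √(2 * Real.pi) * (h t * (1 / √(2 * Real.pi) * gE t)) - steinN h * gE t := by
      funext t
      have := sqrt_two_pi_pos.ne'
      rw [hq]; field_simp
    rw [e, MeasureTheory.integral_sub ((hphi_int hc.measurable h0 h1).const_mul _) (gE_int.const_mul _),
      MeasureTheory.integral_const_mul, MeasureTheory.integral_const_mul, gE_total]
    change √(2 * Real.pi) * steinN h - _ = 0
    ring
  have hI : ∀ w, HasDerivAt (fun w => ∫ t in Set.Iic w, q t) (q w) w := by
    intro w
    have e : (fun w => ∫ t in Set.Iic w, q t) = fun w => (∫ t in Set.Iic 0, q t) + ∫ t in (0:ℝ)..w, q t := by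
      funext w
      rw [← intervalIntegral.integral_Iic_sub_Iic qint.integrableOn qint.integrableOn]
      ring
    rw [e]
    exact ((qc.integral_hasStrictDerivAt 0 w).hasDerivAt).const_add _
  have hib := fun w => I_bound qc qb q0 w
  have inv : ∀ w, Real.exp (w ^ 2 / 2) * gE w = 1 := fun w => by
    rw [gE, ← Real.exp_add]; simp; ring
  refine ⟨fun w => Real.exp (w ^ 2 / 2) * ∫ t in Set.Iic w, q t, ?_, ?_, ?_, hd⟩
  · intro w
    have hE : HasDerivAt (fun w : ℝ => Real.exp (w ^ 2 / 2)) (w * Real.exp (w ^ 2 / 2)) w := by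
      have h1 : HasDerivAt (fun t : ℝ => t ^ 2 / 2) w w :=
        ((hasDerivAt_pow 2 w).div_const 2).congr_deriv (by simp)
      exact h1.exp.congr_deriv (by ring)
    refine (hE.mul (hI w)).congr_deriv ?_
    have : Real.exp (w ^ 2 / 2) * q w = h w - steinN h := by
      rw [hq]; linear_combination (h w - steinN h) * inv w
    linear_combination this
  · intro w
    rw [abs_mul, abs_of_pos (Real.exp_pos _)]
    calc _ ≤ Real.exp (w ^ 2 / 2) * (√(2 * Real.pi) * gE w) :=
          mul_le_mul_of_nonneg_left (hib w).1 (Real.exp_pos _).le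
      _ = _ := by linear_combination (√(2 * Real.pi)) * inv w
  · intro w
    rw [abs_mul, abs_mul, abs_of_pos (Real.exp_pos _)]
    calc _ = Real.exp (w ^ 2 / 2) * (|w| * |∫ t in Set.Iic w, q t|) := by ring
      _ ≤ Real.exp (w ^ 2 / 2) * gE w :=
          mul_le_mul_of_nonneg_left (hib w).2 (Real.exp_pos _).le
      _ = 1 := inv w

lemma cdf_eq (x : ℝ) : stdNormalCDF x = ∫ t in Set.Iic x, 1 / √(2 * Real.pi) * gE t := rfl

lemma cdf_sub_le {x y : ℝ} (hxy : x ≤ y) : stdNormalCDF y - stdNormalCDF x ≤ y - x := by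
  rw [cdf_eq, cdf_eq, intervalIntegral.integral_Iic_sub_Iic phi_int.integrableOn phi_int.integrableOn]
  have hs : 1 / √(2 * Real.pi) ≤ 1 := by
    rw [div_le_one sqrt_two_pi_pos, Real.one_le_sqrt]
    linarith [Real.pi_gt_three]
  calc _ ≤ ∫ t in x..y, (1:ℝ) := by
        apply intervalIntegral.integral_mono_on hxy
        · exact phi_int.intervalIntegrable
        · simp
        · intro t _
          exact mul_le_one₀ hs (gE_pos t).le (gE_le_one t)
    _ = _ := by simp

lemma cdf_mono {x y : ℝ} (hxy : x ≤ y) : stdNormalCDF x ≤ stdNormalCDF y := by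
  rw [cdf_eq, cdf_eq]
  apply MeasureTheory.setIntegral_mono_set phi_int.integrableOn
  · exact Filter.Eventually.of_forall fun t => mul_nonneg (by positivity) (gE_pos t).le
  · exact (Set.Iic_subset_Iic.2 hxy).eventuallyLE

lemma steinN_le {h : ℝ → ℝ} (hc : Continuous h) (h0 : ∀ t, 0 ≤ h t) (h1 : ∀ t, h t ≤ 1) (b : ℝ)
    (hb : ∀ t, b < t → h t = 0) : steinN h ≤ stdNormalCDF b := by
  rw [cdf_eq, ← MeasureTheory.integral_indicator measurableSet_Iic]
  apply MeasureTheory.integral_mono (hphi_int hc.measurable h0 h1) (phi_int.indicator measurableSet_Iic)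
  intro t
  have hp : 0 ≤ 1 / √(2 * Real.pi) * gE t := mul_nonneg (by positivity) (gE_pos t).le
  by_cases ht : t ≤ b
  · rw [Set.indicator_of_mem (by exact ht)]
    exact mul_le_of_le_one_left hp (h1 t)
  · rw [Set.indicator_of_notMem (by exact ht)]
    simp [hb t (not_le.1 ht)]

lemma steinN_ge {h : ℝ → ℝ} (hc : Continuous h) (h0 : ∀ t, 0 ≤ h t) (h1 : ∀ t, h t ≤ 1) (b : ℝ)
    (hb : ∀ t, t ≤ b → h t = 1) : stdNormalCDF b ≤ steinN h := by
  rw [cdf_eq, ← MeasureTheory.integral_indicator measurableSet_Iic]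
  apply MeasureTheory.integral_mono (phi_int.indicator measurableSet_Iic) (hphi_int hc.measurable h0 h1)
  intro t
  have hp : 0 ≤ 1 / √(2 * Real.pi) * gE t := mul_nonneg (by positivity) (gE_pos t).le
  by_cases ht : t ≤ b
  · rw [Set.indicator_of_mem (by exact ht)]
    simp [hb t ht]
  · rw [Set.indicator_of_notMem (by exact ht)]
    exact mul_nonneg (h0 t) hp

noncomputable def dl (a : ℝ → ℝ) (x : ℝ) : ℝ := a x - a (x - 1)
noncomputable def pp (n : ℕ) (x : ℝ) : ℝ := (max x 0) ^ n
noncomputable def spl (n : ℕ) (x : ℝ) : ℝ := dl^[n] (pp n) x / (n.factorial : ℝ)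

lemma dl_leib (q : ℝ → ℝ) (m : ℕ) (x : ℝ) :
    dl^[m+1] (fun x => x * q x) x = x * dl^[m+1] q x + (m+1) * dl^[m] q (x-1) := by
  induction m generalizing x with
  | zero => simp [dl]; ring
  | succ m ih =>
    rw [Function.iterate_succ_apply' dl (m+1) (fun x => x * q x), dl, ih, ih,
      Function.iterate_succ_apply' dl (m+1) q, dl]
    have : dl^[m+1] q (x-1) = dl^[m] q (x-1) - dl^[m] q (x-1-1) := by
      rw [Function.iterate_succ_apply', dl]
    push_cast
    linear_combination -((m:ℝ)+1) * this

lemma pp_succ (n : ℕ) (hn : 1 ≤ n) : pp (n+1) = fun x => x * pp n x := by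
  funext x
  unfold pp
  rcases le_total x 0 with h | h
  · rw [max_eq_right h, zero_pow (by omega), zero_pow (by omega)]; simp
  · rw [max_eq_left h]; ring

lemma spl_rec (n : ℕ) (hn : 1 ≤ n) (x : ℝ) :
    ((n:ℝ)+1) * spl (n+1) x = x * spl n x + (n + 1 - x) * spl n (x-1) := by
  unfold spl
  rw [pp_succ n hn, dl_leib, Nat.factorial_succ, Function.iterate_succ_apply', dl]
  have : (n.factorial : ℝ) ≠ 0 := by positivity
  have : (n:ℝ) + 1 ≠ 0 := by positivity
  push_cast
  field_simp
  ring

lemma pp_cont (n : ℕ) : Continuous (pp n) := by unfold pp; fun_prop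

lemma dl_cont {q : ℝ → ℝ} (hq : Continuous q) : Continuous (dl q) := by
  unfold dl; fun_prop

lemma dl_iter_cont {q : ℝ → ℝ} (hq : Continuous q) (k : ℕ) : Continuous (dl^[k] q) := by
  induction k with
  | zero => simpa
  | succ n ih => rw [Function.iterate_succ_apply']; exact dl_cont ih

lemma spl_cont (n : ℕ) : Continuous (spl n) := by
  unfold spl
  exact (dl_iter_cont (pp_cont n) n).div_const _

lemma pp_integral (n : ℕ) (hn0 : n ≠ 0) (y : ℝ) :
    ∫ u in (0:ℝ)..1, pp n (y - u) = dl (pp (n+1)) y / (n+1) := by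
  rw [intervalIntegral.integral_comp_sub_left (fun t => pp n t)]
  simp only [sub_zero]
  have hn : (n:ℝ) + 1 ≠ 0 := by positivity
  rw [intervalIntegral.integral_eq_sub_of_hasDeriv_right (f := fun t => pp (n+1) t / (n+1))]
  · simp only [dl]; ring
  · exact ((pp_cont _).div_const _).continuousOn
  · intro x _
    rcases lt_or_ge x 0 with hx | hx
    · have : HasDerivAt (fun t => pp (n+1) t / (n+1)) 0 x := by
        refine (hasDerivAt_const x (0:ℝ)).congr_of_eventuallyEq ?_
        filter_upwards [gt_mem_nhds hx] with t ht
        simp [pp, max_eq_right ht.le]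
      have e : pp n x = 0 := by simp [pp, max_eq_right hx.le, hn0]
      rw [e]
      exact this.hasDerivWithinAt
    · have : HasDerivAt (fun t : ℝ => t^(n+1) / (n+1)) (pp n x) x := by
        refine ((hasDerivAt_pow (n+1) x).div_const _).congr_deriv ?_
        simp only [pp, max_eq_left hx]; push_cast; field_simp
      refine this.hasDerivWithinAt.congr ?_ ?_
      · intro t ht
        have : x < t := ht
        simp [pp, max_eq_left (hx.trans this.le)]
      · simp [pp, max_eq_left hx]
  · exact (pp_cont n).intervalIntegrable _ _

lemma dl_integral {q Q : ℝ → ℝ} (hq : Continuous q) (h : ∀ y, ∫ u in (0:ℝ)..1, q (y - u) = Q y) (k : ℕ) (y : ℝ) :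
    ∫ u in (0:ℝ)..1, dl^[k] q (y - u) = dl^[k] Q y := by
  induction k generalizing y with
  | zero => exact h y
  | succ k ih =>
    have hc := dl_iter_cont hq k
    rw [Function.iterate_succ_apply', Function.iterate_succ_apply', dl, ← ih, ← ih]
    simp only [dl]
    rw [intervalIntegral.integral_sub (Continuous.intervalIntegrable (by fun_prop) _ _)
      (Continuous.intervalIntegrable (by fun_prop) _ _)]
    congr 2; funext u; ring_nf

lemma dl_div (q : ℝ → ℝ) (c : ℝ) (k : ℕ) : dl^[k] (fun x => q x / c) = fun x => dl^[k] q x / c := by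
  induction k with
  | zero => rfl
  | succ k ih =>
    rw [Function.iterate_succ_apply', Function.iterate_succ_apply', ih]
    funext x; simp only [dl]; ring

lemma avgA_spl (n : ℕ) (hn0 : n ≠ 0) (c : ℝ) :
    avgA (fun x => spl n (c - x)) = fun x => spl (n+1) (c - x) := by
  funext x
  unfold avgA spl
  rw [intervalIntegral.integral_div]
  have := dl_integral (pp_cont n) (pp_integral n hn0) n (c - x)
  simp only [sub_sub] at this ⊢
  rw [this, dl_div, Nat.factorial_succ, ← Function.iterate_succ_apply]
  push_cast
  field_simp

lemma iter_spl (m : ℕ) (c : ℝ) :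
    avgA^[m] (fun x => spl 1 (c - x)) = fun x => spl (m+1) (c - x) := by
  induction m with
  | zero => rfl
  | succ m ih => rw [Function.iterate_succ_apply', ih, avgA_spl _ (by omega)]

lemma spl_one (x : ℝ) : spl 1 x = max x 0 - max (x - 1) 0 := by
  simp [spl, dl, pp]

/-! ### Combinatorics -/

def insMax {n : ℕ} (p : Fin (n+1)) (π : Equiv.Perm (Fin n)) : Equiv.Perm (Fin (n+1)) :=
  (finSuccEquiv' p).trans ((Equiv.optionCongr π).trans (finSuccEquiv' (Fin.last n)).symm)

lemma insMax_self {n : ℕ} (p : Fin (n+1)) (π : Equiv.Perm (Fin n)) : insMax p π p = Fin.last n := by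
  simp [insMax]

lemma insMax_succAbove {n : ℕ} (p : Fin (n+1)) (π : Equiv.Perm (Fin n)) (i : Fin n) :
    insMax p π (p.succAbove i) = (π i).castSucc := by
  simp [insMax]

lemma insMax_bij (n : ℕ) : Function.Bijective
    (fun x : Fin (n+1) × Equiv.Perm (Fin n) => insMax x.1 x.2) := by
  rw [Fintype.bijective_iff_injective_and_card]
  constructor
  · rintro ⟨p, π⟩ ⟨p', π'⟩ h
    simp only at h
    have hp : p = p' := by
      apply (insMax p π).injective
      rw [insMax_self, h, insMax_self]
    subst hp
    congr 1
    ext i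
    have := congrArg (fun σ : Equiv.Perm (Fin (n+1)) => σ (p.succAbove i)) h
    simp only [insMax_succAbove] at this
    rw [Fin.castSucc_injective _ this]
  · simp [Fintype.card_perm, Nat.factorial_succ]

lemma permVal_lt {n : ℕ} (hn : 1 ≤ n) (π : Equiv.Perm (Fin n)) (j : ℕ) : permVal π j < n := by
  unfold permVal; split_ifs with h
  · exact (π _).2
  · omega

lemma permVal_insMax {n : ℕ} (p : Fin (n+1)) (π : Equiv.Perm (Fin n)) (j : ℕ) (hj : j ≤ n) :
    permVal (insMax p π) j = if j < p then permVal π j else if j = p then n else permVal π (j-1) := by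
  have hp := p.2
  unfold permVal
  rw [dif_pos (by omega)]
  split_ifs with h1 h2 h3 h4
  · have : (⟨j, by omega⟩ : Fin (n+1)) = p.succAbove ⟨j, h2⟩ := by
      rw [Fin.succAbove_of_castSucc_lt]
      · rfl
      · exact h1
    rw [this, insMax_succAbove]; rfl
  · omega
  · have : (⟨j, by omega⟩ : Fin (n+1)) = p := Fin.ext h3
    rw [this, insMax_self]; rfl
  · have : (⟨j, by omega⟩ : Fin (n+1)) = p.succAbove ⟨j-1, h4⟩ := by
      rw [Fin.succAbove_of_le_castSucc]
      · ext; simp; omega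
      · rw [Fin.le_def]; simp; omega
    rw [this, insMax_succAbove]; rfl
  · omega

lemma seq_ins (v : ℕ → ℕ) (M p : ℕ) (hv : ∀ i, v i < M) (v' : ℕ → ℕ) (K : ℕ)
    (hv' : ∀ j, j ≤ K → v' j = if j < p then v j else if j = p then M else v (j-1)) (N : ℕ) (hN : N ≤ K) :
    (N < p → ∑ i ∈ range N, (if v' (i+1) < v' i then 1 else 0) = ∑ i ∈ range N, (if v (i+1) < v i then 1 else 0)) ∧
    (N = p → ∑ i ∈ range N, (if v' (i+1) < v' i then 1 else 0) = ∑ i ∈ range (N-1), (if v (i+1) < v i then 1 else 0)) ∧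
    (p < N → ∑ i ∈ range N, (if v' (i+1) < v' i then 1 else 0) + (if 1 ≤ p ∧ v p < v (p-1) then 1 else 0)
      = ∑ i ∈ range (N-1), (if v (i+1) < v i then 1 else 0) + 1) := by
  induction N with
  | zero => simp
  | succ N ih =>
    obtain ⟨i1, i2, i3⟩ := ih (by omega)
    have hN1 := hv' (N+1) hN
    have hN0 := hv' N (by omega)
    have hvN := hv N
    have hvN1 := hv (N-1)
    rw [sum_range_succ]
    refine ⟨fun h => ?_, fun h => ?_, fun h => ?_⟩
    · rw [if_pos h] at hN1
      rw [if_pos (by omega)] at hN0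
      rw [i1 (by omega), sum_range_succ, hN1, hN0]
    · rw [if_neg (by omega), if_pos h] at hN1
      rw [if_pos (by omega)] at hN0
      rw [i1 (by omega), hN1, hN0, if_neg (by omega)]
      simp
    · rcases Nat.lt_or_ge p N with h2 | h2
      · rw [if_neg (by omega), if_neg (by omega)] at hN1
        rw [if_neg (by omega), if_neg (by omega)] at hN0
        rw [hN1, hN0]
        have := i3 h2
        obtain ⟨N', rfl⟩ : ∃ N', N = N' + 1 := ⟨N-1, by omega⟩
        simp only [Nat.add_sub_cancel] at this ⊢
        rw [sum_range_succ (fun i => if v (i+1) < v i then 1 else 0)]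
        omega
      · have hpN : N = p := by omega
        subst hpN
        rw [if_neg (by omega), if_neg (by omega)] at hN1
        rw [if_neg (by omega), if_pos rfl] at hN0
        rw [i2 rfl, hN1, hN0]
        simp only [Nat.add_sub_cancel]
        rw [if_pos hvN]
        rcases Nat.eq_zero_or_pos N with h0 | h0
        · subst h0; simp
        · obtain ⟨N', rfl⟩ : ∃ N', N = N' + 1 := ⟨N-1, by omega⟩
          simp only [Nat.add_sub_cancel]
          rw [sum_range_succ]
          simp; omega

lemma des_eq {n : ℕ} (π : Equiv.Perm (Fin n)) :
    des π = ∑ i ∈ range (n-1), (if permVal π (i+1) < permVal π i then 1 else 0) := by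
  rw [des, card_filter]

lemma des_insMax {n : ℕ} (hn : 1 ≤ n) (p : Fin (n+1)) (π : Equiv.Perm (Fin n)) :
    des (insMax p π) = if (p:ℕ) = n then des π else
      if 1 ≤ (p:ℕ) ∧ permVal π p < permVal π (p-1) then des π else des π + 1 := by
  have h := seq_ins (permVal π) n p (permVal_lt hn π) (permVal (insMax p π)) n
    (permVal_insMax p π) n le_rfl
  have hp := p.2
  rw [des_eq, des_eq, Nat.add_sub_cancel]
  split_ifs with h1 h2
  · exact h.2.1 h1.symm
  · have := h.2.2 (by omega)
    rw [if_pos h2] at this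
    omega
  · have := h.2.2 (by omega)
    rw [if_neg h2] at this
    omega

lemma sum_insMax {n : ℕ} (hn : 1 ≤ n) (π : Equiv.Perm (Fin n)) (g : ℕ → ℝ) :
    ∑ p : Fin (n+1), g (des (insMax p π)) =
      ((des π : ℝ) + 1) * g (des π) + ((n:ℝ) - des π) * g (des π + 1) := by
  simp only [des_insMax hn]
  rw [Fin.sum_univ_eq_sum_range (fun p : ℕ => g (if p = n then des π else
      if 1 ≤ p ∧ permVal π p < permVal π (p-1) then des π else des π + 1)) (n+1), sum_range_succ]
  obtain ⟨m, rfl⟩ : ∃ m, n = m + 1 := ⟨n-1, by omega⟩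
  rw [sum_range_succ']
  have e : ∀ i ∈ range m, g (if i + 1 = m + 1 then des π else
      if 1 ≤ i + 1 ∧ permVal π (i+1) < permVal π (i+1-1) then des π else des π + 1)
      = if permVal π (i+1) < permVal π i then g (des π) else g (des π + 1) := by
    intro i hi
    rw [mem_range] at hi
    rw [if_neg (by omega)]
    simp only [Nat.add_sub_cancel]
    by_cases h : permVal π (i+1) < permVal π i
    · simp [h]
    · simp [h]
  rw [sum_congr rfl e, sum_ite, sum_const, sum_const]
  have h1 : (filter (fun i => permVal π (i+1) < permVal π i) (range m)).card = des π := rfl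
  have h2 := card_filter_add_card_filter_not (s := range m) (fun i => permVal π (i+1) < permVal π i)
  rw [h1, card_range] at h2
  have h3 : ((filter (fun i => ¬ permVal π (i+1) < permVal π i) (range m)).card : ℝ) = m - des π := by
    rw [eq_sub_iff_add_eq]; exact_mod_cast (by omega)
  rw [h1, nsmul_eq_mul, nsmul_eq_mul, h3]
  simp
  ring

lemma sum_perm_succ {n : ℕ} (hn : 1 ≤ n) (g : ℕ → ℝ) :
    ∑ σ : Equiv.Perm (Fin (n+1)), g (des σ) = ∑ π : Equiv.Perm (Fin n),
      (((des π : ℝ) + 1) * g (des π) + ((n:ℝ) - des π) * g (des π + 1)) := by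
  rw [← Function.Bijective.sum_comp (insMax_bij n) (fun σ => g (des σ)), Fintype.sum_prod_type_right]
  exact sum_congr rfl fun π _ => sum_insMax hn π g

lemma count_eq (n : ℕ) (c : ℤ) :
    ∑ π : Equiv.Perm (Fin (n+1)), (if (des π : ℤ) < c then (1:ℝ) else 0) = ((n+1).factorial : ℝ) * spl (n+1) c := by
  induction n generalizing c with
  | zero =>
    have : ∀ π : Equiv.Perm (Fin (0+1)), des π = 0 := fun π => by simp [des]
    simp only [this, zero_add]
    rw [spl_one]
    simp
    split_ifs with h
    · have : (1:ℝ) ≤ c := by exact_mod_cast h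
      rw [max_eq_left (by linarith), max_eq_left (by linarith)]; ring
    · have : (c:ℝ) ≤ 0 := by exact_mod_cast (not_lt.1 h)
      rw [max_eq_right (by linarith), max_eq_right (by linarith)]; ring
  | succ n ih =>
    rw [sum_perm_succ (by omega) (fun d => if (d:ℤ) < c then (1:ℝ) else 0)]
    have e : ∀ d : ℕ, ((d:ℝ) + 1) * (if (d:ℤ) < c then (1:ℝ) else 0) + (((n+1:ℕ):ℝ) - d) * (if ((d+1:ℕ):ℤ) < c then (1:ℝ) else 0)
        = c * (if (d:ℤ) < c then (1:ℝ) else 0) + ((n:ℝ) + 2 - c) * (if (d:ℤ) < c - 1 then (1:ℝ) else 0) := by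
      intro d
      rcases lt_trichotomy (d:ℤ) (c-1) with h | h | h
      · rw [if_pos (by omega), if_pos (by push_cast; omega), if_pos h]; push_cast; ring
      · rw [if_pos (by omega), if_neg (by push_cast; omega), if_neg (by omega)]
        have : (d:ℝ) = c - 1 := by exact_mod_cast h
        rw [this]; ring
      · rw [if_neg (by omega), if_neg (by push_cast; omega), if_neg (by omega)]; ring
    simp only [e]
    rw [sum_add_distrib, ← mul_sum, ← mul_sum, ih, ih]
    have := spl_rec (n+1) (by omega) (c:ℝ)
    rw [Nat.factorial_succ (n+1)]
    push_cast at this ⊢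
    linear_combination -((n+1).factorial : ℝ) * this


lemma spl_one_mono {x y : ℝ} (h : x ≤ y) : spl 1 x ≤ spl 1 y := by
  rw [spl_one, spl_one]
  rcases max_cases x 0 with h1 | h1 <;> rcases max_cases (x-1) 0 with h2 | h2 <;>
  rcases max_cases y 0 with h3 | h3 <;> rcases max_cases (y-1) 0 with h4 | h4 <;> linarith

lemma spl_one_zero {x : ℝ} (h : x ≤ 0) : spl 1 x = 0 := by
  rw [spl_one, max_eq_right h, max_eq_right (by linarith)]; ring

lemma spl_one_one {x : ℝ} (h : 1 ≤ x) : spl 1 x = 1 := by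
  rw [spl_one, max_eq_left (by linarith), max_eq_left (by linarith)]; ring

lemma spl_one_nonneg (x : ℝ) : 0 ≤ spl 1 x := by
  rcases le_total x 0 with h | h
  · rw [spl_one_zero h]
  · rw [← spl_one_zero le_rfl]; exact spl_one_mono h

lemma spl_one_le_one (x : ℝ) : spl 1 x ≤ 1 := by
  rcases le_total 1 x with h | h
  · rw [spl_one_one h]
  · rw [← spl_one_one le_rfl]; exact spl_one_mono h

lemma stein_main (m : ℕ) (c σ : ℝ) (hσ : 0 < σ) (hσ2 : σ ^ 2 = ((m:ℝ) + 2) / 12) :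
    |avgA^[m] (avgB (fun x => spl 1 (c - x))) 0 - steinN (fun t => spl 1 (c - (σ * t + ((m:ℝ)+1)/2)))|
      ≤ 25 / σ := by
  have sc := spl_cont 1
  set h : ℝ → ℝ := fun t => spl 1 (c - (σ * t + ((m:ℝ)+1)/2)) with hh
  have hc : Continuous h := by fun_prop
  obtain ⟨f, fd, fb, wfb, hN⟩ := stein_exists hc (fun t => spl_one_nonneg _) (fun t => spl_one_le_one _)
  set N := steinN h with hNdef
  have fc : Continuous f := continuous_iff_continuousAt.2 fun x => (fd x).continuousAt
  set W : ℝ → ℝ := fun y => (y - ((m:ℝ)+1)/2) / σ with hW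
  have Wc : Continuous W := by fun_prop
  have Wd : ∀ y, HasDerivAt W (1/σ) y := fun y => ((hasDerivAt_id y).sub_const _).div_const _
  set ψ : ℝ → ℝ := fun y => W y * f (W y) with hψ
  have ψc : Continuous ψ := by fun_prop
  have ψb : ∀ y, |ψ y| ≤ 1 := fun y => wfb _
  set R : ℝ → ℝ := fun y => spl 1 (c - y) with hR
  have Rc : Continuous R := by fun_prop
  have hRW : ∀ y, h (W y) = R y := fun y => by
    simp only [hh, hW, hR]
    congr 2; field_simp; ring
  -- key identity
  set G : ℝ → ℝ := fun y => (1/σ) * ψ y + (1/σ) * (1 * R y + (-N) * 1) with hG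
  have Gc : Continuous G := by fun_prop
  have Fd : ∀ y, HasDerivAt (fun y => f (W y)) (G y) y := fun y => by
    refine ((fd (W y)).comp y (Wd y)).congr_deriv ?_
    rw [hRW]; simp only [hG, hψ]; ring
  have k := key Gc Fd m 0
  have e1 : (fun y => (y - 0 - ((m:ℝ)+1)/2) * f (W y)) = fun y => σ * ψ y + 0 * ψ y := by
    funext y; simp only [hψ, hW]; field_simp; ring
  rw [e1, iter_lin ψc ψc] at k
  have cc : Continuous (fun _ : ℝ => (1:ℝ)) := continuous_const
  have RNc : Continuous (fun y => 1 * R y + (-N) * 1) := by fun_prop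
  rw [hG, avgB_lin ψc RNc, avgB_lin Rc cc, avgB_const,
    iter_lin (avgB_cont ψc) (by have := avgB_cont Rc; fun_prop),
    iter_lin (avgB_cont Rc) cc, iter_const] at k
  simp only at k
  set X := avgA^[m+1] ψ 0 with hX
  set Y := avgA^[m] (avgB ψ) 0 with hY
  set Z := avgA^[m] (avgB R) 0 with hZ
  have hm : (0:ℝ) ≤ m := Nat.cast_nonneg m
  have k2 : ((m:ℝ)+2) * X = (m+1) * (Y + (Z - N)) := by
    have : σ * (σ * X) = ((m:ℝ)+1)/12 * (Y + (Z - N)) := by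
      have h3 : σ * X = (((m:ℝ)+1)/12 * (Y + (Z - N))) / σ := by
        rw [eq_div_iff hσ.ne']
        have := congrArg (· * σ) k
        field_simp at this
        linear_combination this / 12
      rw [h3]; field_simp
    have h4 : σ ^ 2 * X = ((m:ℝ)+1)/12 * (Y + (Z - N)) := by rw [← this]; ring
    rw [hσ2] at h4
    linear_combination 12 * h4
  -- bounds
  have hXb : |X| ≤ 1 := by
    rw [abs_le]
    constructor
    · have := iter_mono (f := fun _ => (-1:ℝ)) (g := ψ) continuous_const ψc (fun y => (abs_le.1 (ψb y)).1) (m+1) 0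
      rwa [iter_const] at this
    · have := iter_mono (g := fun _ => (1:ℝ)) (f := ψ) ψc continuous_const (fun y => (abs_le.1 (ψb y)).2) (m+1) 0
      rwa [iter_const] at this
  have hσ3 : 1 / σ ≤ 3 := by
    rw [div_le_iff₀ hσ]; nlinarith
  have hpi : √(2 * Real.pi) ≤ 3 := by
    rw [Real.sqrt_le_left (by norm_num)]; linarith [Real.pi_lt_d2]
  have osc : ∀ x, ∀ u ∈ Set.Icc (0:ℝ) 1, |ψ (x + u) - ψ x| ≤ (10 + W x ^ 2) / σ := by
    intro x u hu
    have pd : ∀ y, HasDerivAt ψ ((f (W y) + W y * (W y * f (W y) + h (W y) - N)) * (1/σ)) y := fun y => by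
      refine ((Wd y).mul ((fd (W y)).comp y (Wd y))).congr_deriv ?_
      simp only [Function.comp]; ring
    have bd : ∀ y ∈ Set.Icc x (x+u), ‖(f (W y) + W y * (W y * f (W y) + h (W y) - N)) * (1/σ)‖ ≤ (10 + W x ^ 2) / σ := by
      intro y hy
      rw [Real.norm_eq_abs, abs_mul, abs_of_pos (by positivity : 0 < 1/σ), mul_one_div]
      apply div_le_div_of_nonneg_right _ hσ.le
      have b1 : |W y * f (W y) + h (W y) - N| ≤ 2 := by
        have := abs_add_le (W y * f (W y)) (h (W y) - N)
        rw [← add_sub_assoc] at this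
        linarith [wfb (W y), hN (W y)]
      have b2 : |W y| ≤ |W x| + 3 := by
        have : W y = W x + (y - x) / σ := by simp only [hW]; ring
        rw [this]
        refine (abs_add_le _ _).trans ?_
        have h5 : |(y - x)/σ| ≤ 1 / σ := by
          rw [abs_div, abs_of_pos hσ]
          apply div_le_div_of_nonneg_right _ hσ.le
          rw [abs_le]; constructor <;> linarith [hy.1, hy.2, hu.1, hu.2]
        linarith
      calc _ ≤ |f (W y)| + |W y| * |W y * f (W y) + h (W y) - N| := by
            rw [← abs_mul]; exact abs_add_le _ _
        _ ≤ 3 + (|W x| + 3) * 2 := by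
            have := mul_le_mul b2 b1 (abs_nonneg _) (by positivity)
            linarith [fb (W y)]
        _ ≤ 10 + W x ^ 2 := by nlinarith [sq_abs (W x), sq_nonneg (|W x| - 1)]
    have := (convex_Icc x (x+u)).norm_image_sub_le_of_norm_hasDerivWithin_le
      (fun y hy => (pd y).hasDerivWithinAt) bd (Set.left_mem_Icc.2 (by linarith [hu.1])) (Set.right_mem_Icc.2 (by linarith [hu.1]))
    rw [Real.norm_eq_abs, Real.norm_eq_abs] at this
    refine this.trans ?_
    rw [add_sub_cancel_left, abs_of_nonneg hu.1]
    exact mul_le_of_le_one_right (by positivity) hu.2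
  set V : ℝ → ℝ := fun x => (20/σ) * 1 + (2/σ^3) * (x - ((m:ℝ)+1)/2)^2 with hV
  have Vc : Continuous V := by fun_prop
  have hVe : ∀ x, V x = 2 * ((10 + W x ^ 2) / σ) := fun x => by
    simp only [hV, hW]; field_simp; ring
  have hVm : avgA^[m] V 0 ≤ 24 / σ := by
    rw [hV, iter_lin cc (by fun_prop), iter_const, iter_sq]
    simp only
    have : 2/σ^3 * ((0 + (m:ℝ)/2 - (m+1)/2)^2 + m/12) ≤ 4 / σ := by
      have e : (0 + (m:ℝ)/2 - (m+1)/2)^2 + m/12 = (m+3)/12 := by ring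
      rw [e, show 2/σ^3 * (((m:ℝ)+3)/12) = (2 * (((m:ℝ)+3)/12) / σ^2) / σ by field_simp]
      apply div_le_div_of_nonneg_right _ hσ.le
      rw [hσ2, div_le_iff₀ (by positivity)]
      linarith
    have e2 : 20 / σ * 1 + 4 / σ = 24 / σ := by ring
    linarith
  have Ac := avgA_cont ψc
  have Bc := avgB_cont ψc
  have hd : ∀ x, |avgA ψ x - avgB ψ x| ≤ V x := by
    intro x
    rw [hVe]
    have a1 := avgA_le ψc (ψ x + (10 + W x ^ 2) / σ) x (fun u hu => by have := abs_le.1 (osc x u hu); linarith)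
    have a2 := avgA_ge ψc (ψ x - (10 + W x ^ 2) / σ) x (fun u hu => by have := abs_le.1 (osc x u hu); linarith)
    have a3 := avgB_le ψc (ψ x + (10 + W x ^ 2) / σ) x (fun u hu => by have := abs_le.1 (osc x u hu); linarith)
    have a4 := avgB_ge ψc (ψ x - (10 + W x ^ 2) / σ) x (fun u hu => by have := abs_le.1 (osc x u hu); linarith)
    rw [abs_le]; constructor <;> linarith
  have hXY : |X - Y| ≤ 24 / σ := by
    have eX : X = avgA^[m] (avgA ψ) 0 := by rw [hX, Function.iterate_succ_apply]
    have l1 := iter_mono (f := fun x => 1 * avgA ψ x + (-1) * avgB ψ x) (g := V) (by fun_prop) Vc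
      (fun x => by have := abs_le.1 (hd x); linarith) m 0
    have l2 := iter_mono (f := fun x => 1 * avgB ψ x + (-1) * avgA ψ x) (g := V) (by fun_prop) Vc
      (fun x => by have := abs_le.1 (hd x); linarith) m 0
    rw [iter_lin Ac Bc] at l1
    rw [iter_lin Bc Ac] at l2
    simp only at l1 l2
    rw [← eX, ← hY] at l1 l2
    rw [abs_le]; constructor <;> linarith
  have hZN : Z - N = (X - Y) + X / (m+1) := by
    have : (m:ℝ) + 1 ≠ 0 := by positivity
    field_simp
    linear_combination -k2
  rw [hZN]
  have hs : |X / (m+1)| ≤ 1 / σ := by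
    rw [abs_div, abs_of_pos (by positivity : (0:ℝ) < m+1)]
    apply div_le_div₀ (by norm_num) hXb hσ
    nlinarith
  calc _ ≤ |X - Y| + |X / (m+1)| := abs_add_le _ _
    _ ≤ 24 / σ + 1 / σ := add_le_add hXY hs
    _ = 25 / σ := by ring

lemma spl_bound (m : ℕ) (c x σ : ℝ) (hσ : 0 < σ) (hσ2 : σ ^ 2 = ((m:ℝ) + 2) / 12)
    (hc1 : c - 1 ≤ m/2 + x * σ) (hc2 : m/2 + x * σ < c) :
    |spl (m+1) c - stdNormalCDF x| ≤ 27 / σ := by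
  have sc := spl_cont 1
  have e : spl (m+1) c = avgA^[m] (fun x => spl 1 (c - x)) 0 := by
    rw [iter_spl]; simp
  have Rc : ∀ c, Continuous (fun x : ℝ => spl 1 (c - x)) := fun c => by fun_prop
  have hc : ∀ c, Continuous (fun t => spl 1 (c - (σ * t + ((m:ℝ)+1)/2))) := fun c => by fun_prop
  have lo : avgA^[m] (avgB (fun x => spl 1 (c - x))) 0 ≤ spl (m+1) c := by
    rw [e]
    refine iter_mono (avgB_cont (Rc c)) (Rc c) (fun x => ?_) m 0
    exact avgB_le (Rc c) _ x (fun u hu => spl_one_mono (by linarith [hu.1]))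
  have hi : spl (m+1) c ≤ avgA^[m] (avgB (fun x => spl 1 (c + 1 - x))) 0 := by
    rw [e]
    refine iter_mono (Rc c) (avgB_cont (Rc (c+1))) (fun x => ?_) m 0
    exact avgB_ge (Rc (c+1)) _ x (fun u hu => spl_one_mono (by linarith [hu.2]))
  have s1 := abs_le.1 (stein_main m c σ hσ hσ2)
  have s2 := abs_le.1 (stein_main m (c+1) σ hσ hσ2)
  have n1 := steinN_ge (hc c) (fun t => spl_one_nonneg _) (fun t => spl_one_le_one _) (x - 3/2/σ)
    (fun t ht => spl_one_one (by
      have : σ * t ≤ σ * x - 3/2 := by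
        calc σ * t ≤ σ * (x - 3/2/σ) := mul_le_mul_of_nonneg_left ht hσ.le
          _ = _ := by field_simp
      linarith))
  have n2 := steinN_le (hc (c+1)) (fun t => spl_one_nonneg _) (fun t => spl_one_le_one _) (x + 3/2/σ)
    (fun t ht => spl_one_zero (by
      have : σ * x + 3/2 ≤ σ * t := by
        calc σ * x + 3/2 = σ * (x + 3/2/σ) := by field_simp
          _ ≤ _ := mul_le_mul_of_nonneg_left ht.le hσ.le
      linarith))
  have hp : 0 < 3/2/σ := by positivity
  have c1 := cdf_sub_le (x := x - 3/2/σ) (y := x) (by linarith)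
  have c2 := cdf_sub_le (x := x) (y := x + 3/2/σ) (by linarith)
  have q1 : 25/σ + 3/2/σ ≤ 27/σ := by
    rw [← add_div]; exact div_le_div_of_nonneg_right (by norm_num) hσ.le
  rw [abs_le]; constructor <;> linarith

open scoped Classical in
/-- Berry–Esseen bound for the number of descents of a uniformly random permutation. -/
theorem descents_berry_esseen :
    ∃ C : ℝ, 0 < C ∧ ∀ n : ℕ, 1 ≤ n → ∀ x : ℝ,
      |(((Finset.univ.filter (fun π : Equiv.Perm (Fin n) =>
              ((des π : ℝ) - ((n : ℝ) - 1) / 2) / Real.sqrt (((n : ℝ) + 1) / 12) ≤ x)).card : ℝ)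
            / (Nat.factorial n : ℝ)) - stdNormalCDF x| ≤ C / Real.sqrt n := by
  refine ⟨108, by norm_num, ?_⟩
  intro n hn x
  obtain ⟨m, rfl⟩ : ∃ m, n = m + 1 := ⟨n - 1, by omega⟩
  set σ := Real.sqrt ((((m+1:ℕ):ℝ) + 1) / 12) with hσdef
  have hpos : (0:ℝ) < (((m+1:ℕ):ℝ) + 1) / 12 := by positivity
  have hσ : 0 < σ := Real.sqrt_pos.2 hpos
  have hσ2 : σ ^ 2 = ((m:ℝ) + 2) / 12 := by
    rw [hσdef, Real.sq_sqrt hpos.le]; push_cast; ring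
  set c : ℤ := ⌊(m:ℝ)/2 + x * σ⌋ + 1 with hc
  have hcount := count_eq m c
  rw [← Finset.sum_filter, Finset.sum_const, nsmul_eq_mul, mul_one] at hcount
  have hset : (Finset.univ.filter (fun π : Equiv.Perm (Fin (m+1)) =>
      ((des π : ℝ) - (((m+1:ℕ) : ℝ) - 1) / 2) / σ ≤ x)) =
      Finset.univ.filter (fun π : Equiv.Perm (Fin (m+1)) => (des π : ℤ) < c) := by
    apply Finset.filter_congr
    intro π _
    rw [div_le_iff₀ hσ, hc, Int.lt_add_one_iff, Int.le_floor]
    push_cast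
    constructor <;> intro h <;> linarith
  have hb := spl_bound m c x σ hσ hσ2
    (by rw [hc]; push_cast; linarith [Int.floor_le ((m:ℝ)/2 + x * σ)])
    (by rw [hc]; push_cast; exact Int.lt_floor_add_one _)
  have hfin : 27 / σ ≤ 108 / Real.sqrt ((m+1:ℕ):ℝ) := by
    have hs : Real.sqrt ((m+1:ℕ):ℝ) ≤ 4 * σ := by
      rw [Real.sqrt_le_left (by positivity), mul_pow, hσ2]
      push_cast
      have : (0:ℝ) ≤ m := Nat.cast_nonneg m
      linarith
    rw [div_le_div_iff₀ hσ (Real.sqrt_pos.2 (by positivity))]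
    linarith
  have hfac : ((m+1).factorial : ℝ) ≠ 0 := by positivity
  rw [hset]
  have hq : ((Finset.univ.filter (fun π : Equiv.Perm (Fin (m+1)) => (des π : ℤ) < c)).card : ℝ)
      / ((m+1).factorial : ℝ) = spl (m+1) c := by
    rw [div_eq_iff hfac, mul_comm, ← hcount]
  rw [hq]
  exact hb.trans hfin
end

section
/- Let D_n be the number of descents of a uniformly random permutation of S_n. There exists a constant C > 0 such that for all n ≥ 1, | E[(D_n − (n−1)/2)⁴] − n²/48 | ≤ C·n; that is, the fourth central moment of D_n equals 3n²/144 + O(n). -/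
open Finset

/-- Descents of a list. -/
def ldes : List ℕ → ℕ
  | [] => 0
  | [_] => 0
  | a :: b :: l => (if b < a then 1 else 0) + ldes (b :: l)

/-- The list `[n-1, ..., 0]`. -/
def revList : ℕ → List ℕ
  | 0 => []
  | n + 1 => n :: revList n

lemma mem_revList (n x : ℕ) : x ∈ revList n ↔ x < n := by
  induction n with
  | zero => simp [revList]
  | succ n ih => simp [revList, ih]; omega

lemma length_revList (n : ℕ) : (revList n).length = n := by
  induction n with
  | zero => simp [revList]
  | succ n ih => simp [revList, ih]

lemma nodup_revList (n : ℕ) : (revList n).Nodup := by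
  induction n with
  | zero => simp [revList]
  | succ n ih => simp [revList, ih, mem_revList]

lemma ins_aux (t : ℕ) (ys : List ℕ) : ∀ (y : ℕ) (f : ℕ → ℝ), y < t → (∀ z ∈ ys, z < t) →
    ((ys.permutations'Aux t).map (fun m => f (ldes (y :: m)))).sum =
      ((ldes (y :: ys) : ℝ) + 1) * f (ldes (y :: ys)) +
        ((ys.length : ℝ) - ldes (y :: ys)) * f (ldes (y :: ys) + 1) := by
  induction ys with
  | nil =>
    intro y f hy _
    have h1 : ¬ t < y := by omega
    simp [ldes, List.permutations'Aux, h1]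
  | cons z zs ih =>
    intro y f hy hz
    have hzt : z < t := hz z (by simp)
    have key := ih z (fun k => f ((if z < y then 1 else 0) + k)) hzt
      (fun w hw => hz w (by simp [hw]))
    simp only [List.permutations'Aux, List.map_cons, List.sum_cons, List.map_map,
      Function.comp_def, ldes, List.length_cons]
    rw [key]
    have h1 : ¬ t < y := by omega
    simp only [h1, hzt, if_true, if_false]
    split_ifs with hc
    · push_cast
      rw [show 0 + (1 + ldes (z :: zs)) = 1 + ldes (z :: zs) by omega,
        show 1 + (ldes (z :: zs) + 1) = 1 + ldes (z :: zs) + 1 by omega]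
      ring
    · push_cast
      rw [show 0 + (1 + ldes (z :: zs)) = ldes (z :: zs) + 1 by omega,
        show 0 + (ldes (z :: zs) + 1) = ldes (z :: zs) + 1 by omega,
        show 0 + ldes (z :: zs) = ldes (z :: zs) by omega]
      ring

lemma ins (t : ℕ) (l : List ℕ) (f : ℕ → ℝ) (hl : l ≠ []) (h : ∀ z ∈ l, z < t) :
    ((l.permutations'Aux t).map (fun m => f (ldes m))).sum =
      ((ldes l : ℝ) + 1) * f (ldes l) + ((l.length : ℝ) - ldes l) * f (ldes l + 1) := by
  cases l with
  | nil => exact absurd rfl hl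
  | cons y ys =>
    have hy : y < t := h y (by simp)
    simp only [List.permutations'Aux, List.map_cons, List.sum_cons, List.map_map,
      Function.comp_def]
    rw [ins_aux t ys y f hy (fun w hw => h w (by simp [hw]))]
    simp only [ldes, hy, if_true, List.length_cons]
    rw [show 1 + ldes (y :: ys) = ldes (y :: ys) + 1 by omega]
    push_cast
    ring

lemma sum_flatMap_aux (L : List (List ℕ)) (g : List ℕ → List ℝ) :
    (L.flatMap g).sum = (L.map (fun l => (g l).sum)).sum := by
  induction L with
  | nil => simp
  | cons a L ih => simp [List.flatMap_cons, ih]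

/-- Sum of a statistic over all permutations. -/
noncomputable def S (n : ℕ) (f : ℕ → ℝ) : ℝ :=
  ((revList n).permutations'.map (fun l => f (ldes l))).sum

lemma S_succ (n : ℕ) (hn : 1 ≤ n) (f : ℕ → ℝ) :
    S (n + 1) f = S n (fun d => ((d : ℝ) + 1) * f d + ((n : ℝ) - d) * f (d + 1)) := by
  unfold S
  simp only [revList, List.permutations', List.map_flatMap]
  rw [sum_flatMap_aux]
  congr 1
  apply List.map_congr_left
  intro l hl
  rw [List.mem_permutations'] at hl
  have hlen : l.length = n := by rw [hl.length_eq, length_revList]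
  rw [ins n l f]
  · rw [hlen]
  · rintro rfl
    simp at hlen
    omega
  · intro z hz
    exact (mem_revList n z).1 (hl.mem_iff.1 hz)

lemma ldes_eq (l : List ℕ) : ldes l =
    ((Finset.range (l.length - 1)).filter (fun i => l.getD (i + 1) 0 < l.getD i 0)).card := by
  induction l with
  | nil => simp [ldes]
  | cons a l ih =>
    cases l with
    | nil => simp [ldes]
    | cons b l =>
      simp only [ldes]
      rw [ih]
      simp only [Finset.card_filter, List.length_cons, Nat.add_sub_cancel]
      rw [Finset.sum_range_succ' _ l.length]
      simp only [List.getD_cons_succ, List.getD_cons_zero]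
      rw [add_comm]

lemma des_eq_s4 {n : ℕ} (π : Equiv.Perm (Fin n)) :
    des π = ldes (List.ofFn (fun i => (π i : ℕ))) := by
  rw [ldes_eq]
  have h : ∀ j, permVal π j = (List.ofFn (fun i => (π i : ℕ))).getD j 0 := by
    intro j
    unfold permVal
    split_ifs with hj
    · rw [List.getD_eq_getElem _ _ (by simpa using hj)]
      simp
    · rw [List.getD_eq_default _ _ (by simpa using hj)]
  simp only [des, h, List.length_ofFn]

lemma sum_eq (n : ℕ) (f : ℕ → ℝ) : ∑ π : Equiv.Perm (Fin n), f (des π) = S n f := by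
  classical
  have hnd : (revList n).permutations'.Nodup :=
    (List.permutations_perm_permutations' _).nodup_iff.1 (List.nodup_permutations _ (nodup_revList n))
  unfold S
  rw [← List.sum_toFinset _ hnd]
  have hinj : Function.Injective
      (fun π : Equiv.Perm (Fin n) => List.ofFn (fun i => (π i : ℕ))) := by
    intro π σ h
    have := List.ofFn_injective h
    ext i
    exact congrFun this i
  have himg : Finset.univ.image
      (fun π : Equiv.Perm (Fin n) => List.ofFn (fun i => (π i : ℕ))) =
      (revList n).permutations'.toFinset := by
    apply Finset.eq_of_subset_of_card_le
    · intro l hl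
      simp only [Finset.mem_image, Finset.mem_univ, true_and] at hl
      obtain ⟨π, rfl⟩ := hl
      rw [List.mem_toFinset, List.mem_permutations', List.perm_ext_iff_of_nodup _ (nodup_revList n)]
      · intro a
        rw [mem_revList, List.mem_ofFn]
        constructor
        · rintro ⟨i, rfl⟩
          exact (π i).2
        · intro ha
          exact ⟨π.symm ⟨a, ha⟩, by simp⟩
      · rw [List.nodup_ofFn]
        intro i j hij
        exact π.injective (Fin.ext hij)
    · rw [Finset.card_image_of_injective _ hinj, List.toFinset_card_of_nodup hnd,
        ← (List.permutations_perm_permutations' _).length_eq, List.length_permutations,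
        length_revList, Finset.card_univ, Fintype.card_perm, Fintype.card_fin]
  rw [← himg, Finset.sum_image (fun a _ b _ h => hinj h)]
  simp only [des_eq_s4]

lemma S_add (n : ℕ) (f g : ℕ → ℝ) : S n (fun d => f d + g d) = S n f + S n g := by
  simp only [← sum_eq, Finset.sum_add_distrib]

lemma S_mul (n : ℕ) (c : ℝ) (f : ℕ → ℝ) : S n (fun d => c * f d) = c * S n f := by
  simp only [← sum_eq, Finset.mul_sum]

lemma S_one (n : ℕ) (c : ℝ) : S n (fun _ => c) = c * n.factorial := by
  simp only [← sum_eq]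
  simp [Fintype.card_perm, mul_comm]

/-- Normalised central moment. -/
noncomputable def M (k n : ℕ) : ℝ :=
  S n (fun d => ((d : ℝ) - ((n : ℝ) - 1) / 2) ^ k) / (n.factorial : ℝ)

lemma M2_succ (n : ℕ) (hn : 1 ≤ n) :
    (n + 1 : ℝ) * M 2 (n + 1) = (n - 1) * M 2 n + (n + 1) / 4 := by
  have hf : (n.factorial : ℝ) ≠ 0 := by positivity
  have h : S (n + 1) (fun d => ((d : ℝ) - (((n + 1 : ℕ) : ℝ) - 1) / 2) ^ 2) =
      (n - 1) * S n (fun d => ((d : ℝ) - ((n : ℝ) - 1) / 2) ^ 2)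
        + (n + 1) / 4 * n.factorial := by
    rw [S_succ n hn, ← S_one, ← S_mul, ← S_add]
    congr 1
    funext d
    push_cast
    ring
  unfold M
  rw [h, Nat.factorial_succ]
  generalize S n (fun d => ((d : ℝ) - ((n : ℝ) - 1) / 2) ^ 2) = A
  try generalize S n (fun d => ((d : ℝ) - ((n : ℝ) - 1) / 2) ^ 4) = B
  push_cast
  field_simp
  try ring

lemma M4_succ (n : ℕ) (hn : 1 ≤ n) :
    (n + 1 : ℝ) * M 4 (n + 1) =
      (n - 3) * M 4 n + (3 * (n + 1) / 2 - 1) * M 2 n + (n + 1) / 16 := by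
  have hf : (n.factorial : ℝ) ≠ 0 := by positivity
  have h : S (n + 1) (fun d => ((d : ℝ) - (((n + 1 : ℕ) : ℝ) - 1) / 2) ^ 4) =
      (n - 3) * S n (fun d => ((d : ℝ) - ((n : ℝ) - 1) / 2) ^ 4)
        + (3 * (n + 1) / 2 - 1) * S n (fun d => ((d : ℝ) - ((n : ℝ) - 1) / 2) ^ 2)
        + (n + 1) / 16 * n.factorial := by
    rw [S_succ n hn, ← S_one, ← S_mul, ← S_mul, ← S_add, ← S_add]
    congr 1
    funext d
    push_cast
    ring
  unfold M
  rw [h, Nat.factorial_succ]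
  generalize S n (fun d => ((d : ℝ) - ((n : ℝ) - 1) / 2) ^ 2) = A
  try generalize S n (fun d => ((d : ℝ) - ((n : ℝ) - 1) / 2) ^ 4) = B
  push_cast
  field_simp
  try ring

lemma M2_eq (n : ℕ) (hn : 2 ≤ n) : M 2 n = (n + 1) / 12 := by
  induction n, hn using Nat.le_induction with
  | base =>
    have := M2_succ 1 le_rfl
    norm_num at this ⊢
    linarith
  | succ n hn ih =>
    have := M2_succ n (by omega)
    rw [ih] at this
    have h0 : (n + 1 : ℝ) ≠ 0 := by positivity
    apply mul_left_cancel₀ h0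
    rw [this]
    push_cast
    ring

lemma M4_eq (n : ℕ) (hn : 4 ≤ n) : M 4 n = (n + 1) * (5 * n + 3) / 240 := by
  induction n, hn using Nat.le_induction with
  | base =>
    have := M4_succ 3 (by norm_num)
    rw [M2_eq 3 (by norm_num)] at this
    norm_num at this ⊢
    linarith
  | succ n hn ih =>
    have := M4_succ n (by omega)
    rw [ih, M2_eq n (by omega)] at this
    have h0 : (n + 1 : ℝ) ≠ 0 := by positivity
    apply mul_left_cancel₀ h0
    rw [this]
    push_cast
    ring

/-- The fourth central moment of the number of descents is `3n²/144 + O(n)`, i.e.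
`|E[(D_n - (n-1)/2)⁴] - n²/48| ≤ C·n`. -/
theorem descents_fourth_central_moment :
    ∃ C : ℝ, 0 < C ∧ ∀ n : ℕ, 1 ≤ n →
      |(∑ π : Equiv.Perm (Fin n), ((des π : ℝ) - ((n : ℝ) - 1) / 2) ^ 4)
          / (Nat.factorial n : ℝ) - (n : ℝ) ^ 2 / 48| ≤ C * n := by
  refine ⟨1 + |M 4 1 - 1 / 48| + |M 4 2 - 4 / 48| + |M 4 3 - 9 / 48|, by positivity, ?_⟩
  intro n hn
  have e : (∑ π : Equiv.Perm (Fin n), ((des π : ℝ) - ((n : ℝ) - 1) / 2) ^ 4)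
          / (Nat.factorial n : ℝ) = M 4 n := by
    unfold M
    rw [← sum_eq n (fun d => ((d : ℝ) - ((n : ℝ) - 1) / 2) ^ 4)]
  rw [e]
  clear e
  have a1 := abs_nonneg (M 4 1 - 1 / 48)
  have a2 := abs_nonneg (M 4 2 - 4 / 48)
  have a3 := abs_nonneg (M 4 3 - 9 / 48)
  have hn1 : (1 : ℝ) ≤ n := by exact_mod_cast hn
  by_cases h4 : 4 ≤ n
  · rw [M4_eq n h4]
    have : ((n : ℝ) + 1) * (5 * n + 3) / 240 - (n : ℝ) ^ 2 / 48 = (8 * n + 3) / 240 := by ring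
    rw [this, abs_of_nonneg (by positivity)]
    nlinarith
  · have : n = 1 ∨ n = 2 ∨ n = 3 := by omega
    rcases this with rfl | rfl | rfl <;> push_cast <;> norm_num only at a1 a2 a3 ⊢ <;> linarith
end

section
/- For a uniformly random permutation π of S_n, let D_n = des(π) and D'_n = des(π⁻¹). Then the random vector ( (D_n − (n−1)/2)/sqrt((n+1)/12), (D'_n − (n−1)/2)/sqrt((n+1)/12) ) converges in distribution, as n → ∞, to a bivariate normal random vector with mean zero and identity covariance matrix (i.e., to the product of two independent standard Gaussians on ℝ²). -/
open Finset Topology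

namespace DescClt

/-- Weakly increasing sequences, strict at the positions in `P`. -/
noncomputable def stepSeq (n k : ℕ) (P : ℕ → Prop) : Finset (Fin (n+1) → Fin k) := by
  classical
  exact univ.filter (fun a => ∀ i : Fin n, a i.castSucc < a i.succ ∨
    (a i.castSucc = a i.succ ∧ ¬ P i))

lemma card_strictMono (m M : ℕ) [DecidablePred (fun g : Fin m → Fin M => StrictMono g)] :
    (univ.filter (fun g : Fin m → Fin M => StrictMono g)).card = M.choose m := by
  classical
  have h : (univ.filter (fun g : Fin m → Fin M => StrictMono g)).card
      = (powersetCard m (univ : Finset (Fin M))).card := by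
    refine Finset.card_bij' (fun g _ => univ.image g)
      (fun s hs => fun i => s.orderEmbOfFin (mem_powersetCard.1 hs).2 i) ?_ ?_ ?_ ?_
    · intro g hg
      simp only [mem_filter, mem_univ, true_and] at hg
      simp [mem_powersetCard, card_image_of_injective _ hg.injective]
    · intro s hs
      simp only [mem_filter, mem_univ, true_and]
      exact (s.orderEmbOfFin _).strictMono
    · intro g hg
      simp only [mem_filter, mem_univ, true_and] at hg
      symm
      apply Finset.orderEmbOfFin_unique _ _ hg
      intro x; simp
    · intro s hs
      ext x
      simp only [mem_image, mem_univ, true_and]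
      have := Finset.range_orderEmbOfFin s (mem_powersetCard.1 hs).2
      have h2 := Set.ext_iff.1 this x
      rw [Set.mem_range, mem_coe] at h2
      exact h2
  rw [h]; simp

lemma card_stepSeq (n k : ℕ) (P : ℕ → Prop) [DecidablePred P] :
    (stepSeq n k P).card = (k + Nat.count (fun i => ¬ P i) n).choose (n+1) := by
  classical
  set A : ℕ → ℕ := fun i => Nat.count (fun i => ¬ P i) i with hA
  have hAs : ∀ i, A (i+1) = A i + if P i then 0 else 1 := by
    intro i; simp only [hA, Nat.count_succ]; split_ifs <;> simp_all
  have hA0 : A 0 = 0 := by simp [hA]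
  have hAm : ∀ i : Fin (n+1), A i ≤ A n := fun i => Nat.count_monotone _ (by omega)
  rw [← card_strictMono]
  have key : ∀ g : Fin (n+1) → Fin (k + A n), StrictMono g →
      (∀ i : Fin (n+1), A i ≤ g i) ∧ (∀ i : Fin (n+1), (g i : ℕ) - A i < k) := by
    intro g hg
    have h1 : ∀ i : Fin (n+1), A i ≤ g i := by
      intro i
      induction i using Fin.induction with
      | zero => simp [hA0]
      | succ i ih =>
        have : g i.castSucc < g i.succ := hg (by simp [Fin.lt_def])
        have h2 := hAs i
        rw [Fin.lt_def] at this
        simp only [Fin.val_succ, Fin.val_castSucc] at *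
        split_ifs at h2 <;> omega
    refine ⟨h1, ?_⟩
    intro i
    induction i using Fin.reverseInduction with
    | last =>
      have h3 := (g (Fin.last n)).2
      have h4 := h1 (Fin.last n)
      simp only [Fin.val_last] at *
      omega
    | cast i ih =>
      have : g i.castSucc < g i.succ := hg (by simp [Fin.lt_def])
      have h2 := hAs i
      have h4 := h1 i.succ
      have h5 := h1 i.castSucc
      rw [Fin.lt_def] at this
      simp only [Fin.val_succ, Fin.val_castSucc] at *
      split_ifs at h2 <;> omega
  refine Finset.card_bij' (fun a _ => fun i => (⟨a i + A i, by have := hAm i; have := (a i).2; omega⟩ : Fin (k + A n)))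
    (fun g hg => fun i => (⟨g i - A i, (key g (by simpa using hg)).2 i⟩ : Fin k)) ?_ ?_ ?_ ?_
  · intro a ha
    simp only [stepSeq, mem_filter, mem_univ, true_and] at ha ⊢
    rw [Fin.strictMono_iff_lt_succ]
    intro i
    have h2 := hAs i
    have h3 := ha i
    simp only [Fin.lt_def, Fin.ext_iff, Fin.val_succ, Fin.val_castSucc] at *
    split_ifs at h2 with h
    · simp only [h, not_true_eq_false, and_false, or_false] at h3
      omega
    · omega
  · intro g hg
    simp only [stepSeq, mem_filter, mem_univ, true_and] at hg ⊢
    intro i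
    have h1 := (key g hg).1
    have h4 := h1 i.succ
    have h5 := h1 i.castSucc
    have : g i.castSucc < g i.succ := hg (by simp [Fin.lt_def])
    have h2 := hAs i
    simp only [Fin.lt_def, Fin.ext_iff, Fin.val_succ, Fin.val_castSucc] at *
    by_cases h : P i
    · simp only [h, if_true] at h2
      left; omega
    · simp only [h, if_false] at h2
      simp only [h, not_false_iff, and_true]
      omega
  · intro a ha
    ext i; simp
  · intro g hg
    have h1 := (key g (by simpa using hg)).1
    ext i
    have := h1 i
    simp only
    omega

/-- Sequences compatible with `π`. -/
noncomputable def compSeq {m : ℕ} (k : ℕ) (π : Equiv.Perm (Fin m)) : Finset (Fin m → Fin k) := by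
  classical
  exact univ.filter (fun a => Monotone a ∧ ∀ i j, i < j → a i = a j → π i < π j)

lemma mem_compSeq {m k : ℕ} {π : Equiv.Perm (Fin m)} {a : Fin m → Fin k} :
    a ∈ compSeq k π ↔ Monotone a ∧ ∀ i j, i < j → a i = a j → π i < π j := by
  simp [compSeq]

lemma mem_compSeq' {m k : ℕ} {π : Equiv.Perm (Fin m)} {a : Fin m → Fin k} :
    a ∈ compSeq k π ↔ π = Tuple.sort (a ∘ π.symm) := by
  rw [mem_compSeq, Tuple.eq_sort_iff]
  simp [Function.comp_assoc]

lemma compSeq_eq {n k : ℕ} (π : Equiv.Perm (Fin (n+1))) :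
    compSeq k π = stepSeq n k (fun i => permVal π (i + 1) < permVal π i) := by
  classical
  ext a
  rw [mem_compSeq]
  have : (Monotone a ∧ ∀ i j, i < j → a i = a j → π i < π j) ↔
      StrictMono (fun i => toLex (a i, π i)) := by
    constructor
    · rintro ⟨h1, h2⟩ i j hij
      rw [Prod.Lex.toLex_lt_toLex]
      rcases (h1 hij.le).lt_or_eq with h | h
      · exact Or.inl h
      · exact Or.inr ⟨h, h2 i j hij h⟩
    · intro h
      refine ⟨?_, ?_⟩
      · intro i j hij
        rcases hij.eq_or_lt with rfl | h'
        · exact le_rfl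
        · have := h h'
          rw [Prod.Lex.toLex_lt_toLex] at this
          rcases this with h | h
          · exact h.le
          · exact h.1.le
      · intro i j hij he
        have := h hij
        rw [Prod.Lex.toLex_lt_toLex] at this
        rcases this with h | h
        · exact absurd he h.ne
        · exact h.2
  rw [this, Fin.strictMono_iff_lt_succ]
  simp only [stepSeq, mem_filter, mem_univ, true_and]
  refine forall_congr' fun i => ?_
  rw [Prod.Lex.toLex_lt_toLex]
  have e1 : permVal π (i+1) = π i.succ := by
    simp only [permVal]; rw [dif_pos (by omega)]; rfl
  have e2 : permVal π i = π i.castSucc := by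
    simp only [permVal]; rw [dif_pos (by omega)]; rfl
  rw [e1, e2]
  have hne : π i.castSucc ≠ π i.succ := by
    intro h; have := π.injective h; simp [Fin.ext_iff] at this
  have : (π i.castSucc < π i.succ) ↔ ¬ ((π i.succ : ℕ) < π i.castSucc) := by
    rw [Fin.lt_def]; have : (π i.castSucc : ℕ) ≠ π i.succ := fun h => hne (Fin.ext h)
    omega
  rw [this]

lemma des_le {n : ℕ} (π : Equiv.Perm (Fin (n+1))) : des π ≤ n := by
  unfold des
  refine (card_filter_le _ _).trans ?_
  simp

lemma card_compSeq {n : ℕ} (k : ℕ) (π : Equiv.Perm (Fin (n+1))) :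
    (compSeq k π).card = (k + (n - des π)).choose (n+1) := by
  classical
  rw [compSeq_eq, card_stepSeq]
  congr 2
  have h1 : des π = Nat.count (fun i => permVal π (i + 1) < permVal π i) n := by
    rw [Nat.count_eq_card_filter_range]; rfl
  rw [h1, Nat.count_eq_card_filter_range, Nat.count_eq_card_filter_range]
  have := Finset.card_filter_add_card_filter_not (s := range n) (fun i => permVal π (i + 1) < permVal π i)
  rw [card_range] at this
  omega

lemma card_monotone_fin (n M : ℕ) [DecidablePred (fun g : Fin (n+1) → Fin M => Monotone g)] :
    (univ.filter (fun g : Fin (n+1) → Fin M => Monotone g)).card = (M+n).choose (n+1) := by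
  classical
  have h := card_stepSeq n M (fun _ => False)
  have e : Nat.count (fun _ => ¬ False) n = n := by
    rw [Nat.count_eq_card_filter_range]; simp
  rw [e] at h
  rw [← h]
  congr 1
  ext a
  simp only [stepSeq, mem_filter, mem_univ, true_and, not_false_iff, and_true,
    Fin.monotone_iff_le_succ, le_iff_lt_or_eq]

lemma card_monotone (n M : ℕ) (α : Type*) [Fintype α] [DecidableEq α] [LinearOrder α] (hα : Fintype.card α = M)
   [DecidablePred (fun g : Fin (n+1) → α => Monotone g)] :
    (univ.filter (fun g : Fin (n+1) → α => Monotone g)).card = (M+n).choose (n+1) := by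
  classical
  rw [← card_monotone_fin]
  let e : Fin M ≃o α := Fintype.orderIsoFinOfCardEq α hα
  refine Finset.card_bij' (fun g _ => e.symm ∘ g) (fun g _ => e ∘ g) ?_ ?_ ?_ ?_
  · intro g hg; simp at hg ⊢; exact e.symm.monotone.comp hg
  · intro g hg; simp at hg ⊢; exact e.monotone.comp hg
  · intro g hg; ext; simp
  · intro g hg; ext; simp

lemma two_sided (n k l : ℕ) :
    ∑ π : Equiv.Perm (Fin (n+1)), (compSeq k π).card * (compSeq l π⁻¹).card
      = (k * l + n).choose (n+1) := by
  classical
  rw [← card_monotone n (k*l) (Fin k ×ₗ Fin l) (by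
    rw [← Fintype.card_congr (toLex : Fin k × Fin l ≃ Fin k ×ₗ Fin l)]; simp)]
  simp_rw [← Finset.card_product]
  rw [← Finset.card_sigma]
  have hsort : ∀ (π : Equiv.Perm (Fin (n+1))) (b : Fin (n+1) → Fin l), b ∈ compSeq l π⁻¹ →
      π⁻¹ = Tuple.sort (b ∘ π) := by
    intro π b hb
    exact mem_compSeq'.1 hb
  refine Finset.card_bij (fun x _ => fun i => toLex (x.2.1 i, x.2.2 (x.1 i))) ?_ ?_ ?_
  · rintro ⟨π, a, b⟩ h
    simp only [mem_sigma, mem_univ, true_and, mem_product, mem_filter, mem_compSeq] at h ⊢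
    obtain ⟨⟨ha, ha'⟩, hb, hb'⟩ := h
    intro i j hij
    rcases hij.eq_or_lt with rfl | hij
    · exact le_rfl
    rw [Prod.Lex.toLex_le_toLex]
    rcases (ha hij.le).lt_or_eq with h | h
    · exact Or.inl h
    · exact Or.inr ⟨h, hb (ha' i j hij h).le⟩
  · rintro ⟨π, a, b⟩ h ⟨π', a', b'⟩ h' heq
    simp only [mem_sigma, mem_univ, true_and, mem_product] at h h'
    have h1 : ∀ i, a i = a' i ∧ b (π i) = b' (π' i) := by
      intro i
      have := congrFun heq i
      have := toLex.injective this
      simpa using this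
    have hc : b ∘ π = b' ∘ π' := funext fun i => (h1 i).2
    have hπ : π = π' := by
      apply inv_injective
      rw [hsort π b h.2, hsort π' b' h'.2, hc]
    subst hπ
    have hb : b = b' := by
      ext1 i
      have := (h1 (π.symm i)).2
      simpa using this
    have ha : a = a' := funext fun i => (h1 i).1
    rw [ha, hb]
  · intro F hF
    simp only [mem_filter, mem_univ, true_and] at hF
    let c : Fin (n+1) → Fin l := fun i => (ofLex (F i)).2
    let a : Fin (n+1) → Fin k := fun i => (ofLex (F i)).1
    let σ := Tuple.sort c
    refine ⟨⟨σ⁻¹, a, c ∘ σ⟩, ?_, ?_⟩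
    · simp only [mem_sigma, mem_univ, true_and, mem_product]
      have hb : c ∘ σ ∈ compSeq l (σ⁻¹)⁻¹ := by
        rw [mem_compSeq', inv_inv]
        simp [Function.comp_assoc, σ]
      refine ⟨?_, hb⟩
      rw [mem_compSeq]
      have hF' : ∀ i j, i ≤ j → a i < a j ∨ (a i = a j ∧ c i ≤ c j) := by
        intro i j hij
        have := hF hij
        rwa [Prod.Lex.le_iff] at this
      refine ⟨fun i j hij => ?_, fun i j hij he => ?_⟩
      · rcases hF' i j hij with h | h
        · exact h.le
        · exact h.1.le
      · have hcc : c i ≤ c j := by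
          rcases hF' i j hij.le with h | h
          · exact absurd he h.ne
          · exact h.2
        by_contra hcon
        have hlt : σ⁻¹ j < σ⁻¹ i := by
          refine lt_of_le_of_ne (not_lt.1 hcon) ?_
          intro h
          exact hij.ne' (σ⁻¹.injective h)
        rw [inv_inv, mem_compSeq] at hb
        have h1 : c j ≤ c i := by
          have := hb.1 hlt.le
          simpa using this
        have h2 := hb.2 _ _ hlt (by simpa using le_antisymm h1 hcc)
        simp at h2
        exact absurd h2 (not_lt.2 hij.le)
    · ext1 i
      simp [a, c]

lemma sum_words {m : ℕ} (k : ℕ) {R : Type*} [CommSemiring R] (g : Equiv.Perm (Fin m) → R) :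
    ∑ w : Fin m → Fin k, g (Tuple.sort w) = ∑ π : Equiv.Perm (Fin m), ((compSeq k π).card : R) * g π := by
  classical
  rw [← Finset.sum_fiberwise univ (fun w : Fin m → Fin k => Tuple.sort w)]
  refine Finset.sum_congr rfl fun π _ => ?_
  have : ∀ w ∈ univ.filter (fun w : Fin m → Fin k => Tuple.sort w = π), g (Tuple.sort w) = g π := by
    intro w hw; simp at hw; rw [hw]
  rw [Finset.sum_congr rfl this, Finset.sum_const, nsmul_eq_mul]
  congr 2
  refine Finset.card_bij' (fun w _ => w ∘ π) (fun a _ => a ∘ π.symm) ?_ ?_ ?_ ?_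
  · intro w hw; simp at hw; rw [mem_compSeq']; simp [Function.comp_assoc, hw]
  · intro a ha; rw [mem_compSeq'] at ha; simp [← ha]
  · intro w hw; simp [Function.comp_assoc]
  · intro w hw; simp [Function.comp_assoc]

lemma sum_card_compSeq (m k : ℕ) : ∑ π : Equiv.Perm (Fin m), (compSeq k π).card = k ^ m := by
  have := sum_words (m := m) k (R := ℕ) (fun _ => 1)
  simp at this
  exact this.symm

end DescClt

namespace DescClt

/-- descents of a word -/
def wdes {n k : ℕ} (w : Fin (n+1) → Fin k) : ℕ := ∑ i : Fin n, if w i.succ < w i.castSucc then 1 else 0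

lemma des_sort {n k : ℕ} (w : Fin (n+1) → Fin k) : des (Tuple.sort w)⁻¹ = wdes w := by
  classical
  set σ := Tuple.sort w with hσ
  have hb : w ∘ σ ∈ compSeq k σ := by
    rw [mem_compSeq']; simp [Function.comp_assoc, hσ]
  rw [mem_compSeq] at hb
  have key : ∀ i : Fin n, σ⁻¹ i.succ < σ⁻¹ i.castSucc ↔ w i.succ < w i.castSucc := by
    intro i
    constructor
    · intro h
      refine lt_of_le_of_ne (by simpa using hb.1 h.le) fun he => ?_
      have := hb.2 _ _ h (by simpa using he)
      simp [Fin.lt_def] at this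
    · intro h
      by_contra hcon
      have := hb.1 (not_lt.1 hcon)
      simp at this
      exact absurd h (not_lt.2 this)
  unfold des wdes
  rw [Finset.card_filter]
  rw [show n + 1 - 1 = n by omega, ← Fin.sum_univ_eq_sum_range (fun i => if permVal σ⁻¹ (i + 1) < permVal σ⁻¹ i then 1 else 0)]
  refine Finset.sum_congr rfl fun i _ => ?_
  have e1 : permVal σ⁻¹ (i+1) = σ⁻¹ i.succ := by
    simp only [permVal]; rw [dif_pos (by omega)]; rfl
  have e2 : permVal σ⁻¹ i = σ⁻¹ i.castSucc := by
    simp only [permVal]; rw [dif_pos (by omega)]; rfl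
  rw [e1, e2]
  exact if_congr (key i) rfl rfl

lemma cyc_sum {R : Type*} [CommSemiring R] (z : R) (k : ℕ) (u : Fin k) :
    ∑ v : Fin k, z ^ (k * (if v < u then 1 else 0) + (v : ℕ)) = z ^ (u : ℕ) * ∑ j ∈ range k, z ^ j := by
  have : ∑ v : Fin k, z ^ (k * (if v < u then 1 else 0) + (v : ℕ))
      = ∑ v ∈ range k, z ^ (k * (if v < (u : ℕ) then 1 else 0) + v) := by
    rw [← Fin.sum_univ_eq_sum_range (fun v => z ^ (k * (if v < (u : ℕ) then 1 else 0) + v))]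
    rfl
  rw [this]
  obtain ⟨d, hd⟩ := Nat.exists_eq_add_of_le u.2.le
  generalize (u : ℕ) = a at *
  subst hd
  rw [Finset.sum_range_add]
  conv_rhs => rw [add_comm a d, Finset.sum_range_add]
  rw [mul_add, Finset.mul_sum, Finset.mul_sum, add_comm]
  congr 1
  · refine Finset.sum_congr rfl fun x hx => ?_
    simp [pow_add]
  · refine Finset.sum_congr rfl fun x hx => ?_
    simp only [mem_range] at hx
    simp [hx, pow_add]; ring

lemma word_sum {R : Type*} [CommSemiring R] (z : R) (n k : ℕ) :
    ∑ w : Fin (n+1) → Fin k, z ^ (k * wdes w + (w (Fin.last n) : ℕ)) = (∑ j ∈ range k, z ^ j) ^ (n+1) := by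
  induction n with
  | zero =>
    rw [← (Equiv.funUnique (Fin 1) (Fin k)).symm.sum_comp]
    simp [wdes, Fin.sum_univ_eq_sum_range (fun v => z ^ v)]
  | succ n ih =>
    rw [← (Fin.snocEquiv (fun _ : Fin (n+2) => Fin k)).sum_comp, Fintype.sum_prod_type_right]
    rw [pow_succ, ← ih, Finset.sum_mul]
    refine Finset.sum_congr rfl fun w _ => ?_
    have : ∀ v : Fin k, wdes (Fin.snoc w v : Fin (n+2) → Fin k) = wdes w + if v < w (Fin.last n) then 1 else 0 := by
      intro v
      unfold wdes
      rw [Fin.sum_univ_castSucc]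
      congr 1
      · refine Finset.sum_congr rfl fun i _ => ?_
        rw [Fin.succ_castSucc]
        simp only [Fin.snoc_castSucc]
      · rw [Fin.succ_last]
        simp only [Fin.snoc_castSucc, Fin.snoc_last]
    simp only [Fin.snocEquiv, Equiv.coe_fn_mk, this, Fin.snoc_last]
    have h2 := cyc_sum z k (w (Fin.last n))
    rw [pow_add, mul_assoc, ← h2, Finset.mul_sum]
    refine Finset.sum_congr rfl fun v _ => ?_
    rw [← pow_add]; congr 1; ring

/-- normalized Eulerian polynomial -/
noncomputable def eul (m : ℕ) (s : ℂ) : ℂ := (∑ π : Equiv.Perm (Fin m), s ^ des π) / (m.factorial : ℂ)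

lemma tendsto_card_compSeq {n : ℕ} (π : Equiv.Perm (Fin (n+1))) :
    Filter.Tendsto (fun k : ℕ => ((compSeq k π).card : ℂ) / (k:ℂ)^(n+1)) Filter.atTop
      (𝓝 (1 / ((n+1).factorial : ℂ))) := by
  have h0 : Filter.Tendsto (fun k : ℕ => ((compSeq k π).card : ℝ) / (k:ℝ)^(n+1)) Filter.atTop
      (𝓝 (1 / ((n+1).factorial : ℝ))) := by
    set c := n - des π
    have h1 := (isEquivalent_choose (n+1)).comp_tendsto (Filter.tendsto_add_atTop_nat c)
    have h2 : Filter.Tendsto (fun k : ℕ => (((k + c : ℕ) : ℝ) / k)) Filter.atTop (𝓝 1) := by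
      have : Filter.Tendsto (fun k : ℕ => 1 + (c : ℝ) / k) Filter.atTop (𝓝 (1 + 0)) :=
        tendsto_const_nhds.add (tendsto_const_div_atTop_nhds_zero_nat _)
      rw [add_zero] at this
      refine this.congr' ?_
      filter_upwards [Filter.eventually_gt_atTop 0] with k hk
      have : (k:ℝ) ≠ 0 := by positivity
      push_cast; field_simp
    have h3 := (Asymptotics.isEquivalent_iff_tendsto_one (by
      filter_upwards [Filter.eventually_gt_atTop 0] with k hk
      simp only [Function.comp]
      positivity)).1 h1
    have h4 := h3.mul ((h2.pow (n+1)).mul_const (1 / ((n+1).factorial : ℝ)))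
    simp only [one_pow, one_mul] at h4
    refine h4.congr' ?_
    filter_upwards [Filter.eventually_gt_atTop 0] with k hk
    have : (k:ℝ) ≠ 0 := by positivity
    have : ((k + c : ℕ) :ℝ) ≠ 0 := by positivity
    rw [card_compSeq]
    simp only [Pi.div_apply, Function.comp, div_pow]
    change _ = (((k + c).choose (n+1) : ℕ) : ℝ) / _
    field_simp
  have := (Complex.continuous_ofReal.tendsto _).comp h0
  simpa [Function.comp_def] using this

lemma norm_exp_I_sub_one_le (x : ℝ) : ‖Complex.exp (x * Complex.I) - 1‖ ≤ |x| := by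
  rw [mul_comm]; exact Real.norm_exp_I_mul_ofReal_sub_one_le
  
lemma eul_approx (n : ℕ) (θ : ℝ) (hθ : θ ≠ 0) :
    ‖eul (n+1) (Complex.exp (θ * Complex.I)) - ((Complex.exp (θ * Complex.I) - 1) / (θ * Complex.I)) ^ (n+1)‖ ≤ |θ| := by
  set s := Complex.exp (θ * Complex.I) with hs
  set z : ℕ → ℂ := fun k => Complex.exp (((θ / k : ℝ) : ℂ) * Complex.I) with hz
  have hzk : ∀ k : ℕ, 0 < k → z k ^ k = s := by
    intro k hk
    rw [hz, hs]; simp only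
    rw [← Complex.exp_nat_mul]
    congr 1
    have : (k:ℂ) ≠ 0 := by exact_mod_cast hk.ne'
    push_cast; field_simp
  have hns : ‖s‖ = 1 := Complex.norm_exp_ofReal_mul_I θ
  -- main inequality
  have main : ∀ k : ℕ, 0 < k → ‖(∑ π : Equiv.Perm (Fin (n+1)), (((compSeq k π).card : ℂ)/ (k:ℂ)^(n+1)) * s ^ des π⁻¹)
      - ((∑ j ∈ range k, z k ^ j) / k) ^ (n+1)‖ ≤ |θ| := by
    intro k hk
    have hk' : (k:ℂ) ≠ 0 := by exact_mod_cast hk.ne'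
    have e1 : (∑ π : Equiv.Perm (Fin (n+1)), (((compSeq k π).card : ℂ)/ (k:ℂ)^(n+1)) * s ^ des π⁻¹)
        = (∑ w : Fin (n+1) → Fin k, s ^ wdes w) / (k:ℂ)^(n+1) := by
      have := sum_words (m := n+1) k (fun π => s ^ des π⁻¹)
      simp only [des_sort] at this
      rw [this, Finset.sum_div]
      refine Finset.sum_congr rfl fun π _ => by ring
    rw [e1, div_pow, ← word_sum, ← sub_div, ← Finset.sum_sub_distrib, norm_div, norm_pow, Complex.norm_natCast,
      div_le_iff₀ (by positivity)]
    refine (norm_sum_le _ _).trans ?_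
    have : ∀ w ∈ (univ : Finset (Fin (n+1) → Fin k)), ‖s ^ wdes w - z k ^ (k * wdes w + (w (Fin.last n) : ℕ))‖ ≤ |θ| := by
      intro w _
      rw [pow_add, pow_mul, hzk k hk]
      rw [show s ^ wdes w - s ^ wdes w * z k ^ ((w (Fin.last n) : ℕ)) = - (s ^ wdes w * (z k ^ ((w (Fin.last n) : ℕ)) - 1)) by ring]
      rw [norm_neg, norm_mul, norm_pow, hns, one_pow, one_mul]
      have e2 : z k ^ ((w (Fin.last n) : ℕ)) = Complex.exp (((((w (Fin.last n) : ℕ) : ℝ) * (θ / k) : ℝ) : ℂ) * Complex.I) := by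
        rw [hz]; simp only; rw [← Complex.exp_nat_mul]; congr 1; push_cast; ring
      rw [e2]
      refine (norm_exp_I_sub_one_le _).trans ?_
      rw [abs_mul, abs_div, Nat.abs_cast, Nat.abs_cast]
      have h3 : (((w (Fin.last n) : ℕ) : ℝ)) ≤ k := by exact_mod_cast (w (Fin.last n)).2.le
      have hkr : (0:ℝ) < k := by exact_mod_cast hk
      calc _ ≤ (k:ℝ) * (|θ| / k) := by gcongr
        _ = |θ| := by field_simp
    refine (Finset.sum_le_sum this).trans ?_
    simp [mul_comm]
  -- limits
  have lim1 : Filter.Tendsto (fun k : ℕ => ∑ π : Equiv.Perm (Fin (n+1)), (((compSeq k π).card : ℂ)/ (k:ℂ)^(n+1)) * s ^ des π⁻¹)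
      Filter.atTop (𝓝 (eul (n+1) s)) := by
    have : eul (n+1) s = ∑ π : Equiv.Perm (Fin (n+1)), (1 / ((n+1).factorial : ℂ)) * s ^ des π⁻¹ := by
      rw [eul, ← Equiv.sum_comp (Equiv.inv (Equiv.Perm (Fin (n+1)))), Finset.sum_div]
      refine Finset.sum_congr rfl fun π _ => ?_
      simp; ring
    rw [this]
    exact tendsto_finsetSum _ fun π _ => (tendsto_card_compSeq π).mul_const _
  have hθc : (θ : ℂ) ≠ 0 := by exact_mod_cast hθ
  have lim2 : Filter.Tendsto (fun k : ℕ => ((∑ j ∈ range k, z k ^ j) / k))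
      Filter.atTop (𝓝 ((s - 1) / (θ * Complex.I))) := by
    -- k (z k - 1) → θ I
    have h1 : Filter.Tendsto (fun k : ℕ => (k:ℂ) * (z k - 1)) Filter.atTop (𝓝 (θ * Complex.I)) := by
      have hd : HasDerivAt (fun x : ℂ => Complex.exp (x * (θ * Complex.I))) (θ * Complex.I) 0 := by
        have := ((hasDerivAt_id (0:ℂ)).mul_const (θ * Complex.I)).cexp
        simpa using this
      have hsl := hasDerivAt_iff_tendsto_slope.1 hd
      have hinv : Filter.Tendsto (fun k : ℕ => ((k:ℂ))⁻¹) Filter.atTop (𝓝[≠] 0) := by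
        rw [tendsto_nhdsWithin_iff]
        refine ⟨tendsto_inv_atTop_nhds_zero_nat, ?_⟩
        filter_upwards [Filter.eventually_gt_atTop 0] with k hk
        simp [hk.ne']
      refine (hsl.comp hinv).congr fun k => ?_
      simp only [Function.comp, slope, hz]
      simp
      left
      ring_nf
    have h2 : Filter.Tendsto (fun k : ℕ => (s - 1) / ((k:ℂ) * (z k - 1))) Filter.atTop (𝓝 ((s - 1) / (θ * Complex.I))) :=
      tendsto_const_nhds.div h1 (by simp [hθ])
    refine h2.congr' ?_
    have hne : ∀ᶠ k : ℕ in Filter.atTop, (k:ℂ) * (z k - 1) ≠ 0 :=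
      h1.eventually_ne (by simp [hθ])
    filter_upwards [hne, Filter.eventually_gt_atTop 0] with k h3 hk
    have h4 : z k ≠ 1 := by
      intro h; rw [h] at h3; simp at h3
    rw [geom_sum_eq h4, hzk k hk]
    rw [div_div, mul_comm]
  refine le_of_tendsto (lim1.sub (lim2.pow (n+1))).norm ?_
  filter_upwards [Filter.eventually_gt_atTop 0] with k hk using main k hk

end DescClt

namespace DescClt

lemma hasSum_compSeq {n : ℕ} (π : Equiv.Perm (Fin (n+1))) {s : ℂ} (hs : ‖s‖ < 1) :
    HasSum (fun k : ℕ => ((compSeq k π).card : ℂ) * s ^ k) (s ^ (des π + 1) / (1 - s) ^ (n+2)) := by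
  have h1 := hasSum_choose_mul_geometric_of_norm_lt_one (n+1) hs
  have h2 := h1.mul_left (s ^ (des π + 1))
  rw [← hasSum_nat_add_iff' (des π + 1)]
  have hd := des_le π
  have hz : ∑ i ∈ range (des π + 1), ((compSeq i π).card : ℂ) * s ^ i = 0 := by
    refine Finset.sum_eq_zero fun i hi => ?_
    rw [mem_range] at hi
    rw [card_compSeq, Nat.choose_eq_zero_of_lt (by omega)]; simp
  rw [hz, sub_zero]
  have e : (fun k : ℕ => ((compSeq (k + (des π + 1)) π).card : ℂ) * s ^ (k + (des π + 1)))
      = fun k : ℕ => s ^ (des π + 1) * (((k + (n + 1)).choose (n + 1) : ℕ) * s ^ k) := by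
    ext k
    rw [card_compSeq, show k + (des π + 1) + (n - des π) = k + (n+1) by omega, pow_add]
    ring
  rw [e, ← mul_one_div]
  exact h2

lemma hasSum_pow {m : ℕ} (hm : m ≠ 0) {s : ℂ} (hs : ‖s‖ < 1) :
    HasSum (fun k : ℕ => (k : ℂ) ^ m * s ^ k) (s * ((m.factorial : ℂ) * eul m s) / (1 - s) ^ (m+1)) := by
  obtain ⟨n, rfl⟩ := Nat.exists_eq_succ_of_ne_zero hm
  have h := hasSum_sum (s := univ) (fun (π : Equiv.Perm (Fin (n+1))) _ => hasSum_compSeq π hs)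
  convert h using 1
  · ext k
    rw [← Finset.sum_mul, ← Nat.cast_sum, sum_card_compSeq]; simp
  · rw [eul, mul_div_cancel₀ _ (by exact_mod_cast Nat.factorial_ne_zero _), ← Finset.sum_div, Finset.mul_sum]
    congr 1
    refine Finset.sum_congr rfl fun π _ => by ring

lemma ascFactorial_eq (m x : ℕ) : x.ascFactorial m = ∑ j ∈ range (m+1), Nat.stirlingFirst m j * x ^ j := by
  induction m with
  | zero => simp
  | succ m ih =>
    rw [Nat.ascFactorial_succ, ih, Finset.sum_range_succ' _ (m+1)]
    simp only [Nat.stirlingFirst_succ_succ, Nat.stirlingFirst_succ_zero, zero_mul, add_zero]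
    simp only [add_mul, Finset.sum_add_distrib]
    rw [add_comm, Finset.mul_sum, Finset.mul_sum]
    congr 1
    · rw [Finset.sum_range_succ' (fun j => m * _) m, Finset.sum_range_succ (fun j => m * _ * _)]
      rw [Nat.stirlingFirst_eq_zero_of_lt (show m < m+1 by omega)]
      have : m * (Nat.stirlingFirst m 0 * x ^ 0) = 0 := by
        cases m <;> simp
      rw [this]; simp [mul_assoc]
    · refine Finset.sum_congr rfl fun j _ => by ring

lemma two_sided' (n k l : ℕ) :
    ((n+1).factorial : ℂ) * ∑ π : Equiv.Perm (Fin (n+1)), ((compSeq k π).card : ℂ) * ((compSeq l π⁻¹).card : ℂ)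
      = ∑ j ∈ range (n+1), (Nat.stirlingFirst (n+1) (j+1) : ℂ) * (k:ℂ)^(j+1) * (l:ℂ)^(j+1) := by
  have h := two_sided n k l
  have h2 := Nat.ascFactorial_eq_factorial_mul_choose' (k*l) (n+1)
  rw [show k * l + (n+1) - 1 = k * l + n by omega, ← h, ascFactorial_eq, Finset.sum_range_succ',
    Nat.stirlingFirst_succ_zero, zero_mul, add_zero] at h2
  have h3 := congrArg (Nat.cast : ℕ → ℂ) h2
  push_cast at h3
  rw [← h3]
  refine Finset.sum_congr rfl fun j _ => by ring

lemma identity_aux (n : ℕ) {s t : ℂ} (hs : ‖s‖ < 1) (ht : ‖t‖ < 1) :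
    ((n+1).factorial : ℂ) * ∑ π : Equiv.Perm (Fin (n+1)), (s ^ (des π + 1) / (1 - s) ^ (n+2)) * (t ^ (des π⁻¹ + 1) / (1 - t) ^ (n+2))
      = ∑ j ∈ range (n+1), (Nat.stirlingFirst (n+1) (j+1) : ℂ) *
        (s * (((j+1).factorial : ℂ) * eul (j+1) s) / (1 - s) ^ (j+2)) * (t * (((j+1).factorial : ℂ) * eul (j+1) t) / (1 - t) ^ (j+2)) := by
  have step1 : ∀ k : ℕ, ((n+1).factorial : ℂ) * ∑ π : Equiv.Perm (Fin (n+1)), ((compSeq k π).card : ℂ) * (t ^ (des π⁻¹ + 1) / (1 - t) ^ (n+2))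
      = ∑ j ∈ range (n+1), (Nat.stirlingFirst (n+1) (j+1) : ℂ) * (k:ℂ)^(j+1) * (t * (((j+1).factorial : ℂ) * eul (j+1) t) / (1 - t) ^ (j+2)) := by
    intro k
    have hL := (hasSum_sum (s := univ) (fun (π : Equiv.Perm (Fin (n+1))) _ =>
      (hasSum_compSeq π⁻¹ ht).mul_left ((compSeq k π).card : ℂ))).mul_left ((n+1).factorial : ℂ)
    have hR := hasSum_sum (s := range (n+1)) (fun j _ =>
      (hasSum_pow (Nat.succ_ne_zero j) ht).mul_left ((Nat.stirlingFirst (n+1) (j+1) : ℂ) * (k:ℂ)^(j+1)))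
    refine hL.unique ?_
    convert hR using 1
    ext l
    have := two_sided' n k l
    calc _ = (((n+1).factorial : ℂ) * ∑ π : Equiv.Perm (Fin (n+1)), ((compSeq k π).card : ℂ) * ((compSeq l π⁻¹).card : ℂ)) * t ^ l := by
          rw [mul_assoc, Finset.sum_mul]; simp only [mul_assoc]
      _ = _ := by
          rw [this, Finset.sum_mul]; simp only [mul_assoc]
  have hL := (hasSum_sum (s := univ) (fun (π : Equiv.Perm (Fin (n+1))) _ =>
      (hasSum_compSeq π hs).mul_right (t ^ (des π⁻¹ + 1) / (1 - t) ^ (n+2)))).mul_left ((n+1).factorial : ℂ)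
  have hR := hasSum_sum (s := range (n+1)) (fun j _ =>
      ((hasSum_pow (Nat.succ_ne_zero j) hs).mul_left (Nat.stirlingFirst (n+1) (j+1) : ℂ)).mul_right
        (t * (((j+1).factorial : ℂ) * eul (j+1) t) / (1 - t) ^ (j+2)))
  refine hL.unique ?_
  convert hR using 1
  ext k
  have := step1 k
  calc _ = (((n+1).factorial : ℂ) * ∑ π : Equiv.Perm (Fin (n+1)), ((compSeq k π).card : ℂ) * (t ^ (des π⁻¹ + 1) / (1 - t) ^ (n+2))) * s ^ k := by
          rw [mul_assoc, Finset.sum_mul]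
          congr 1
          exact Finset.sum_congr rfl fun π _ => by ring
      _ = _ := by
          rw [this, Finset.sum_mul]
          refine Finset.sum_congr rfl fun π _ => ?_
          simp only [Nat.succ_eq_add_one]
          ring

/-- joint -/
noncomputable def joint (m : ℕ) (s t : ℂ) : ℂ :=
  (∑ π : Equiv.Perm (Fin m), s ^ des π * t ^ des π⁻¹) / (m.factorial : ℂ)

lemma identity_disc (n : ℕ) {s t : ℂ} (hs : ‖s‖ < 1) (ht : ‖t‖ < 1) (hs0 : s ≠ 0) (ht0 : t ≠ 0) :
    joint (n+1) s t = ∑ j ∈ range (n+1), ((Nat.stirlingFirst (n+1) (j+1) : ℂ) * ((j+1).factorial : ℂ)^2 / ((n+1).factorial : ℂ)^2)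
      * (eul (j+1) s * eul (j+1) t * ((1 - s) * (1 - t)) ^ (n - j)) := by
  have h := identity_aux n hs ht
  have hs1 : 1 - s ≠ 0 := by
    intro h; rw [← sub_eq_zero.1 h] at hs; simp at hs
  have ht1 : 1 - t ≠ 0 := by
    intro h; rw [← sub_eq_zero.1 h] at ht; simp at ht
  have hf : ((n+1).factorial : ℂ) ≠ 0 := by exact_mod_cast Nat.factorial_ne_zero _
  have e : joint (n+1) s t = (((n+1).factorial : ℂ) * ∑ π : Equiv.Perm (Fin (n+1)), (s ^ (des π + 1) / (1 - s) ^ (n+2)) * (t ^ (des π⁻¹ + 1) / (1 - t) ^ (n+2)))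
      * (((1 - s) * (1 - t)) ^ (n+2) / (s * t * ((n+1).factorial : ℂ)^2)) := by
    rw [joint, mul_assoc, Finset.sum_mul, Finset.mul_sum, Finset.sum_div]
    refine Finset.sum_congr rfl fun π _ => ?_
    rw [mul_pow]
    field_simp
    ring
  rw [e, h, Finset.sum_mul]
  refine Finset.sum_congr rfl fun j hj => ?_
  rw [mem_range] at hj
  obtain ⟨d, rfl⟩ := Nat.exists_eq_add_of_le (Nat.lt_succ_iff.1 hj)
  rw [show j + d - j = d by omega, show j + d + 2 = (j + 2) + d by ring, pow_add _ (j+2) d, mul_pow _ _ (j+2)]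
  field_simp

lemma identity_circle (n : ℕ) {s t : ℂ} (hs : ‖s‖ = 1) (ht : ‖t‖ = 1) :
    joint (n+1) s t = ∑ j ∈ range (n+1), ((Nat.stirlingFirst (n+1) (j+1) : ℂ) * ((j+1).factorial : ℂ)^2 / ((n+1).factorial : ℂ)^2)
      * (eul (j+1) s * eul (j+1) t * ((1 - s) * (1 - t)) ^ (n - j)) := by
  have c1 : Continuous (fun r : ℝ => joint (n+1) (r * s) (r * t)) := by
    unfold joint; fun_prop
  have c2 : Continuous (fun r : ℝ => ∑ j ∈ range (n+1), ((Nat.stirlingFirst (n+1) (j+1) : ℂ) * ((j+1).factorial : ℂ)^2 / ((n+1).factorial : ℂ)^2)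
      * (eul (j+1) (r * s) * eul (j+1) (r * t) * ((1 - r * s) * (1 - r * t)) ^ (n - j))) := by
    unfold eul; fun_prop
  have l1 := (c1.tendsto 1).mono_left (nhdsWithin_le_nhds (s := Set.Iio 1))
  have l2 := (c2.tendsto 1).mono_left (nhdsWithin_le_nhds (s := Set.Iio 1))
  have hev : ∀ᶠ r : ℝ in 𝓝[<] 1, r ∈ Set.Ioo (0:ℝ) 1 := Ioo_mem_nhdsLT (by norm_num)
  have := tendsto_nhds_unique (l1.congr' ?_) l2
  · simpa using this
  · filter_upwards [hev] with r hr
    have hn : ∀ u : ℂ, ‖u‖ = 1 → ‖(r:ℂ) * u‖ < 1 := by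
      intro u hu
      rw [norm_mul, hu, mul_one, Complex.norm_real, Real.norm_eq_abs, abs_of_pos hr.1]; exact hr.2
    have hz : ∀ u : ℂ, ‖u‖ = 1 → (r:ℂ) * u ≠ 0 := by
      intro u hu
      refine mul_ne_zero (by exact_mod_cast hr.1.ne') ?_
      intro h; simp [h] at hu
    exact identity_disc n (hn s hs) (hn t ht) (hz s hs) (hz t ht)

lemma stirling_bound (m : ℕ) : ∀ j, j ≤ m → Nat.stirlingFirst m j * j.factorial ^ 2 * (m - j).factorial ≤ m.factorial ^ 2 := by
  induction m with
  | zero => intro j hj; obtain rfl : j = 0 := by omega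
            simp
  | succ m ih =>
    intro j hj
    rcases j with _ | j
    · simp
    rw [Nat.stirlingFirst_succ_succ]
    have h2 := ih j (by omega)
    obtain ⟨d, rfl⟩ := Nat.exists_eq_add_of_le (show j ≤ m by omega)
    rcases d with _ | d
    · rw [Nat.stirlingFirst_eq_zero_of_lt (by omega)]
      simp [Nat.stirlingFirst_self]
    · have h1 := ih (j+1) (by omega)
      rw [show j + (d+1) - (j+1) = d by omega] at h1
      rw [show j + (d+1) - j = d+1 by omega] at h2
      rw [show j + (d+1) + 1 - (j+1) = d+1 by omega]
      set c1 := Nat.stirlingFirst (j + (d+1)) (j+1)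
      set c2 := Nat.stirlingFirst (j + (d+1)) j
      set M := (j + (d+1)).factorial ^ 2
      have e1 : (j+1).factorial = (j+1) * j.factorial := Nat.factorial_succ j
      have e2 : (d+1).factorial = (d+1) * d.factorial := Nat.factorial_succ d
      have e3 : (j + (d+1) + 1).factorial ^ 2 = (j+d+2)^2 * M := by
        rw [Nat.factorial_succ, mul_pow]
        rfl
      rw [e3]
      calc ((j + (d+1)) * c1 + c2) * (j+1).factorial ^ 2 * (d+1).factorial
          = (j + (d+1)) * (d+1) * (c1 * (j+1).factorial ^ 2 * d.factorial) + (j+1)^2 * (c2 * j.factorial^2 * (d+1).factorial) := by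
            rw [e2, e1]; ring
        _ ≤ (j + (d+1)) * (d+1) * M + (j+1)^2 * M := by gcongr
        _ = ((j + (d+1)) * (d+1) + (j+1)^2) * M := by ring
        _ ≤ _ := by
          gcongr
          nlinarith

lemma norm_eul_le (m : ℕ) {s : ℂ} (hs : ‖s‖ = 1) : ‖eul m s‖ ≤ 1 := by
  rw [eul, norm_div, Complex.norm_natCast, div_le_one (by positivity)]
  refine (norm_sum_le _ _).trans ?_
  simp [norm_pow, hs, Fintype.card_perm]

lemma joint_approx (n : ℕ) {s t : ℂ} (hs : ‖s‖ = 1) (ht : ‖t‖ = 1) :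
    ‖joint (n+1) s t - eul (n+1) s * eul (n+1) t‖ ≤ Real.exp (‖1 - s‖ * ‖1 - t‖) - 1 := by
  have hf : ((n+1).factorial : ℂ) ≠ 0 := by exact_mod_cast Nat.factorial_ne_zero _
  rw [identity_circle n hs ht, Finset.sum_range_succ, Nat.stirlingFirst_self]
  simp only [Nat.cast_one, one_mul, Nat.sub_self, pow_zero, mul_one]
  rw [div_self (pow_ne_zero _ hf), one_mul, add_sub_cancel_right]
  set x := ‖1 - s‖ * ‖1 - t‖ with hx
  have hx0 : 0 ≤ x := by positivity
  refine (norm_sum_le _ _).trans ?_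
  have hterm : ∀ j ∈ range n, ‖((Nat.stirlingFirst (n+1) (j+1) : ℂ) * ((j+1).factorial : ℂ)^2 / ((n+1).factorial : ℂ)^2)
      * (eul (j+1) s * eul (j+1) t * ((1 - s) * (1 - t)) ^ (n - j))‖ ≤ x ^ (n - j) / (n - j).factorial := by
    intro j hj
    rw [mem_range] at hj
    have hb := stirling_bound (n+1) (j+1) (by omega)
    rw [show n + 1 - (j+1) = n - j by omega] at hb
    have hb' : (Nat.stirlingFirst (n+1) (j+1) : ℝ) * ((j+1).factorial : ℝ) ^ 2 * ((n - j).factorial : ℝ) ≤ ((n+1).factorial : ℝ) ^ 2 := by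
      exact_mod_cast hb
    have h1 : ‖((Nat.stirlingFirst (n+1) (j+1) : ℂ) * ((j+1).factorial : ℂ)^2 / ((n+1).factorial : ℂ)^2)‖ ≤ 1 / ((n - j).factorial : ℝ) := by
      rw [norm_div, norm_mul, norm_pow, norm_pow, Complex.norm_natCast, Complex.norm_natCast, Complex.norm_natCast,
        div_le_div_iff₀ (by positivity) (by positivity), one_mul]
      exact hb'
    rw [norm_mul, norm_mul, norm_mul, norm_pow, norm_mul, ← hx]
    calc _ ≤ 1 / ((n - j).factorial : ℝ) * (1 * 1 * x ^ (n - j)) := by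
          gcongr
          · exact norm_eul_le _ hs
          · exact norm_eul_le _ ht
      _ = _ := by ring
  refine (Finset.sum_le_sum hterm).trans ?_
  have h2 := Real.sum_le_exp_of_nonneg hx0 (n+1)
  rw [Finset.sum_range_succ'] at h2
  simp only [pow_zero, Nat.factorial_zero, Nat.cast_one, div_one] at h2
  rw [← Finset.sum_range_reflect] at h2
  have : ∑ j ∈ range n, x ^ (n - j) / ((n - j).factorial : ℝ) = ∑ j ∈ range n, x ^ (n - 1 - j + 1) / ((n - 1 - j + 1).factorial : ℝ) := by
    refine Finset.sum_congr rfl fun j hj => ?_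
    rw [mem_range] at hj
    rw [show n - 1 - j + 1 = n - j by omega]
  rw [this]
  linarith

end DescClt

namespace DescClt
open Filter Complex

noncomputable def sig (n : ℕ) : ℝ := Real.sqrt (((n : ℝ) + 1) / 12)

lemma sig_pos (n : ℕ) : 0 < sig n := Real.sqrt_pos.2 (by positivity)
lemma sig_sq (n : ℕ) : sig n ^ 2 = ((n : ℝ) + 1) / 12 := Real.sq_sqrt (by positivity)

lemma sig_tendsto : Tendsto sig atTop atTop := by
  refine Real.tendsto_sqrt_atTop.comp ?_
  refine Tendsto.atTop_div_const (by norm_num) ?_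
  exact tendsto_atTop_add_const_right _ _ tendsto_natCast_atTop_atTop

lemma div_sig_tendsto (θ : ℝ) : Tendsto (fun n => θ / sig n) atTop (𝓝 0) :=
  sig_tendsto.const_div_atTop θ

lemma sinc_limit (θ : ℝ) (hθ : θ ≠ 0) :
    Tendsto (fun n : ℕ => (Real.sin (θ / sig n / 2) / (θ / sig n / 2)) ^ n) atTop (𝓝 (Real.exp (-θ^2/2))) := by
  set y : ℕ → ℝ := fun n => θ / sig n / 2 with hy
  have hy0 : Tendsto y atTop (𝓝 0) := by simpa using (div_sig_tendsto θ).div_const 2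
  have hyne : ∀ n, y n ≠ 0 := fun n => by
    have := (sig_pos n).ne'
    simp only [hy]; positivity
  have hq : Tendsto (fun n => (Real.sin (y n) / y n - 1) / (y n)^2) atTop (𝓝 (-1/6)) := by
    rw [tendsto_iff_norm_sub_tendsto_zero]
    have hsq : Tendsto (fun n => |y n| ^ 2 / 100) atTop (𝓝 0) := by
      simpa using (hy0.abs.pow 2).div_const 100
    refine squeeze_zero' (Eventually.of_forall fun n => norm_nonneg _) ?_ hsq
    have hle : ∀ᶠ n in atTop, |y n| < 1 := by
      have := hy0.abs
      rw [abs_zero] at this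
      exact this.eventually_lt_const one_pos
    filter_upwards [hle] with n hn
    have h1 := Real.sin_bound hn.le
    have hne := hyne n
    have e : (Real.sin (y n) / y n - 1) / (y n)^2 - -1/6 = (Real.sin (y n) - (y n - (y n)^3/6)) / (y n)^3 := by
      field_simp; ring
    rw [e, norm_div, Real.norm_eq_abs, norm_pow, Real.norm_eq_abs, div_le_iff₀ (by positivity)]
    calc _ ≤ _ := h1
      _ = _ := by ring
  have hny : Tendsto (fun n : ℕ => (n:ℝ) * (y n)^2) atTop (𝓝 (3 * θ^2)) := by
    have h1 : Tendsto (fun n : ℕ => 3 * θ^2 * ((n:ℝ) / ((n:ℝ) + 1))) atTop (𝓝 (3 * θ^2 * 1)) :=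
      (tendsto_natCast_div_add_atTop (1:ℝ)).const_mul _
    rw [mul_one] at h1
    refine h1.congr fun n => ?_
    simp only [hy]
    rw [div_pow, div_pow, sig_sq]
    field_simp; ring
  have := Real.tendsto_one_add_pow_exp_of_tendsto (g := fun n => Real.sin (y n) / y n - 1) (t := -θ^2/2) (by
    have := hny.mul hq
    rw [show 3 * θ^2 * (-1/6) = -θ^2/2 by ring] at this
    refine this.congr fun n => ?_
    have hne := hyne n
    field_simp)
  simpa using this

lemma exp_sub_one_eq (x : ℝ) (hx : x ≠ 0) :
    (Complex.exp (x * I) - 1) / (x * I) = Complex.exp ((x / 2 : ℝ) * I) * ((Real.sin (x / 2) / (x / 2) : ℝ) : ℂ) := by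
  have h1 : Complex.exp (x * I) = Complex.exp ((x / 2 : ℝ) * I) * Complex.exp ((x / 2 : ℝ) * I) := by
    rw [← Complex.exp_add]; congr 1; push_cast; ring
  have h2 : Complex.exp ((x / 2 : ℝ) * I) * Complex.exp (-((x / 2 : ℝ) * I)) = 1 := by
    rw [← Complex.exp_add]; simp
  have hxc : (x:ℂ) ≠ 0 := by exact_mod_cast hx
  have h3 : ((Real.sin (x / 2) : ℝ) : ℂ) =
      (Complex.exp (-((x / 2 : ℝ) * I)) - Complex.exp ((x / 2 : ℝ) * I)) * I / 2 := by
    rw [ofReal_sin, Complex.sin, neg_mul]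
  rw [ofReal_div (Real.sin (x / 2)), h3, h1, ofReal_div x 2]
  rw [ofReal_div x 2] at h2
  generalize Complex.exp (((x : ℂ) / ((2 : ℝ) : ℂ)) * I) = A at *
  generalize Complex.exp (-(((x : ℂ) / ((2 : ℝ) : ℂ)) * I)) = B at *
  push_cast
  field_simp
  have := I_sq
  linear_combination (A * (A - B)) * this + h2

/-- centered univariate characteristic function -/
noncomputable def phi (n : ℕ) (θ : ℝ) : ℂ :=
  Complex.exp ((-(θ / sig n * (((n:ℝ) - 1) / 2)) : ℝ) * I) * eul n (Complex.exp ((θ / sig n : ℝ) * I))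

lemma phi_limit (θ : ℝ) : Tendsto (fun n => phi n θ) atTop (𝓝 (Complex.exp ((-θ^2/2 : ℝ)))) := by
  by_cases hθ : θ = 0
  · subst hθ
    have : ∀ n, phi n 0 = 1 := by
      intro n
      have hf : (n.factorial : ℂ) ≠ 0 := by exact_mod_cast Nat.factorial_ne_zero _
      simp [phi, eul, Fintype.card_perm, hf]
    simp [this]
  set x : ℕ → ℝ := fun n => θ / sig n with hx
  have hx0 : Tendsto x atTop (𝓝 0) := div_sig_tendsto θ
  have hxne : ∀ n, x n ≠ 0 := fun n => div_ne_zero hθ (sig_pos n).ne'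
  have hA : Tendsto (fun n => Complex.exp ((x n / 2 : ℝ) * I) * (((Real.sin (x n / 2) / (x n / 2)) ^ n : ℝ) : ℂ)) atTop
      (𝓝 (Complex.exp ((-θ^2/2 : ℝ)))) := by
    have h1 : Tendsto (fun n => Complex.exp ((x n / 2 : ℝ) * I)) atTop (𝓝 1) := by
      have c : Continuous (fun u : ℝ => Complex.exp ((u / 2 : ℝ) * I)) := by fun_prop
      simpa [Function.comp_def] using (c.tendsto 0).comp hx0
    have h2 := (continuous_ofReal.tendsto _).comp (sinc_limit θ hθ)
    have := h1.mul h2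
    rw [one_mul, ofReal_exp] at this
    exact this
  have hB : Tendsto (fun n => phi n θ - Complex.exp ((x n / 2 : ℝ) * I) * (((Real.sin (x n / 2) / (x n / 2)) ^ n : ℝ) : ℂ)) atTop (𝓝 0) := by
    rw [tendsto_zero_iff_norm_tendsto_zero]
    have habs : Tendsto (fun n => |x n|) atTop (𝓝 0) := by simpa using hx0.abs
    refine squeeze_zero' (Eventually.of_forall fun n => norm_nonneg _) ?_ habs
    filter_upwards [eventually_gt_atTop 0] with n hn
    obtain ⟨m, rfl⟩ := Nat.exists_eq_succ_of_ne_zero hn.ne'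
    have h := eul_approx m (x (m+1)) (hxne _)
    rw [exp_sub_one_eq _ (hxne _), mul_pow, ← Complex.exp_nat_mul] at h
    have e : phi (m+1) θ - Complex.exp ((x (m+1) / 2 : ℝ) * I) * (((Real.sin (x (m+1) / 2) / (x (m+1) / 2)) ^ (m+1) : ℝ) : ℂ)
        = Complex.exp ((-(x (m+1) * ((((m+1 : ℕ):ℝ) - 1) / 2)) : ℝ) * I) *
          (eul (m+1) (Complex.exp (x (m+1) * I)) - Complex.exp ((m+1 : ℕ) * ((x (m+1) / 2 : ℝ) * I)) * ((Real.sin (x (m+1) / 2) / (x (m+1) / 2) : ℝ) : ℂ) ^ (m+1)) := by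
      rw [phi, mul_sub, ← mul_assoc, ← Complex.exp_add, ofReal_pow]
      congr 3
      push_cast; ring
    rw [Nat.succ_eq_add_one, e, norm_mul, norm_exp_ofReal_mul_I, one_mul]
    exact h
  have := hB.add hA
  simpa using this

noncomputable def jphi (n : ℕ) (θ η : ℝ) : ℂ :=
  Complex.exp ((-(θ / sig n * (((n:ℝ) - 1) / 2)) : ℝ) * I) * Complex.exp ((-(η / sig n * (((n:ℝ) - 1) / 2)) : ℝ) * I) *
    joint n (Complex.exp ((θ / sig n : ℝ) * I)) (Complex.exp ((η / sig n : ℝ) * I))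

lemma jphi_limit (θ η : ℝ) : Tendsto (fun n => jphi n θ η) atTop
    (𝓝 (Complex.exp ((-θ^2/2 : ℝ)) * Complex.exp ((-η^2/2 : ℝ)))) := by
  have hA := (phi_limit θ).mul (phi_limit η)
  have hB : Tendsto (fun n => jphi n θ η - phi n θ * phi n η) atTop (𝓝 0) := by
    rw [tendsto_zero_iff_norm_tendsto_zero]
    have hc : Tendsto (fun n => Real.exp (|θ / sig n| * |η / sig n|) - 1) atTop (𝓝 0) := by
      have h1 := (div_sig_tendsto θ).abs.mul (div_sig_tendsto η).abs
      have := ((Real.continuous_exp.tendsto _).comp h1).sub_const 1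
      simpa [Function.comp_def] using this
    refine squeeze_zero' (Eventually.of_forall fun n => norm_nonneg _) ?_ hc
    filter_upwards [eventually_gt_atTop 0] with n hn
    obtain ⟨m, rfl⟩ := Nat.exists_eq_succ_of_ne_zero hn.ne'
    have h := joint_approx m (norm_exp_ofReal_mul_I (θ / sig (m+1))) (norm_exp_ofReal_mul_I (η / sig (m+1)))
    have e : jphi (m+1) θ η - phi (m+1) θ * phi (m+1) η =
      Complex.exp ((-(θ / sig (m+1) * ((((m+1 : ℕ):ℝ) - 1) / 2)) : ℝ) * I) * Complex.exp ((-(η / sig (m+1) * ((((m+1:ℕ):ℝ) - 1) / 2)) : ℝ) * I) *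
      (joint (m+1) (Complex.exp ((θ / sig (m+1) : ℝ) * I)) (Complex.exp ((η / sig (m+1) : ℝ) * I))
        - eul (m+1) (Complex.exp ((θ / sig (m+1) : ℝ) * I)) * eul (m+1) (Complex.exp ((η / sig (m+1) : ℝ) * I))) := by
      rw [jphi, phi, phi]; ring
    rw [Nat.succ_eq_add_one, e, norm_mul, norm_mul, norm_exp_ofReal_mul_I, norm_exp_ofReal_mul_I, one_mul, one_mul]
    refine h.trans ?_
    have h3 : ∀ u : ℝ, ‖1 - Complex.exp (u * I)‖ ≤ |u| := fun u => by
      rw [norm_sub_rev]; exact norm_exp_I_sub_one_le u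
    gcongr
    · exact h3 _
    · exact h3 _
  have := hB.add hA
  simpa using this

section Levy
open MeasureTheory ProbabilityTheory

noncomputable def pt (n : ℕ) (π : Equiv.Perm (Fin n)) : ℝ × ℝ :=
  (((des π : ℝ) - ((n : ℝ) - 1) / 2) / sig n, ((des π⁻¹ : ℝ) - ((n : ℝ) - 1) / 2) / sig n)

/-- uniform average of Dirac masses -/
noncomputable def unif (n : ℕ) : @Measure (Equiv.Perm (Fin n)) ⊤ :=
  @PMF.toMeasure _ ⊤ (PMF.uniformOfFintype (Equiv.Perm (Fin n)))

noncomputable def law (n : ℕ) : ProbabilityMeasure (WithLp 2 (ℝ × ℝ)) :=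
  ⟨@Measure.map _ _ ⊤ _ (fun π => WithLp.toLp 2 (pt n π)) (unif n), by
    let _ : MeasurableSpace (Equiv.Perm (Fin n)) := ⊤
    have : IsProbabilityMeasure (unif n) := by unfold unif; infer_instance
    exact Measure.isProbabilityMeasure_map (measurable_from_top).aemeasurable⟩

lemma integral_law {E : Type*} [NormedAddCommGroup E] [NormedSpace ℝ E] [CompleteSpace E] (n : ℕ) (g : WithLp 2 (ℝ × ℝ) → E) (hg : Continuous g) :
    ∫ x, g x ∂(law n : Measure (WithLp 2 (ℝ × ℝ))) = ((n.factorial : ℝ)⁻¹) • ∑ π : Equiv.Perm (Fin n), g (WithLp.toLp 2 (pt n π)) := by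
  let _ : MeasurableSpace (Equiv.Perm (Fin n)) := ⊤
  have : (law n : Measure (WithLp 2 (ℝ × ℝ))) = Measure.map (fun π => WithLp.toLp 2 (pt n π)) (unif n) := rfl
  rw [this, integral_map (measurable_from_top).aemeasurable hg.aestronglyMeasurable]
  unfold unif
  rw [PMF.integral_eq_sum, Finset.smul_sum]
  refine Finset.sum_congr rfl fun π _ => ?_
  simp [Fintype.card_perm]

noncomputable def lim : ProbabilityMeasure (WithLp 2 (ℝ × ℝ)) :=
  ⟨((gaussianReal 0 1).prod (gaussianReal 0 1)).map (WithLp.toLp 2), 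
    Measure.isProbabilityMeasure_map (by fun_prop)⟩

lemma law_tendsto : Tendsto law atTop (𝓝 lim) := by
  apply ProbabilityMeasure.tendsto_of_tendsto_charFun
  intro t
  have h1 : charFun (lim : Measure (WithLp 2 (ℝ × ℝ))) t = Complex.exp ((-t.fst^2/2 : ℝ)) * Complex.exp ((-t.snd^2/2 : ℝ)) := by
    have : (lim : Measure (WithLp 2 (ℝ × ℝ))) = ((gaussianReal 0 1).prod (gaussianReal 0 1)).map (WithLp.toLp 2) := rfl
    rw [this, charFun_prod, charFun_gaussianReal, charFun_gaussianReal]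
    congr 2 <;> simp <;> ring
  rw [h1]
  refine (jphi_limit t.fst t.snd).congr fun n => ?_
  rw [charFun_apply, integral_law _ _ (by fun_prop), jphi, joint, Complex.real_smul]
  rw [Finset.sum_div, Finset.mul_sum, Finset.mul_sum]
  refine Finset.sum_congr rfl fun π _ => ?_
  rw [← Complex.exp_nat_mul, ← Complex.exp_nat_mul, mul_div_assoc', ← Complex.exp_add, ← Complex.exp_add, ← Complex.exp_add, WithLp.prod_inner_apply]
  have hs : (sig n : ℂ) ≠ 0 := by exact_mod_cast (sig_pos n).ne'
  rw [div_eq_inv_mul]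
  push_cast
  congr 2
  simp [pt]
  field_simp
  ring

end Levy
end DescClt

/-- The pair of normalized descent counts `(des(π), des(π⁻¹))` of a uniformly random
permutation converges in distribution to a bivariate standard normal vector (mean zero,
identity covariance), i.e. to the product of two independent standard Gaussians:
expectations of bounded continuous test functions converge to the corresponding
Gaussian integral. -/
theorem descents_pair_bivariate_clt (f : BoundedContinuousFunction (ℝ × ℝ) ℝ) :
    Filter.Tendsto
      (fun n : ℕ =>
        (∑ π : Equiv.Perm (Fin n),
            f (((des π : ℝ) - ((n : ℝ) - 1) / 2) / Real.sqrt (((n : ℝ) + 1) / 12),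
               ((des π⁻¹ : ℝ) - ((n : ℝ) - 1) / 2) / Real.sqrt (((n : ℝ) + 1) / 12)))
          / (Nat.factorial n : ℝ))
      Filter.atTop
      (𝓝 (∫ p, f p ∂((ProbabilityTheory.gaussianReal 0 1).prod
          (ProbabilityTheory.gaussianReal 0 1)))) := by
  have h := MeasureTheory.ProbabilityMeasure.tendsto_iff_forall_integral_tendsto.1 DescClt.law_tendsto
    (f.compContinuous ⟨WithLp.ofLp, by fun_prop⟩)
  have e : ∫ x, (f.compContinuous ⟨WithLp.ofLp, by fun_prop⟩) x ∂(DescClt.lim : MeasureTheory.Measure (WithLp 2 (ℝ × ℝ)))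
      = ∫ p, f p ∂((ProbabilityTheory.gaussianReal 0 1).prod (ProbabilityTheory.gaussianReal 0 1)) := by
    have : (DescClt.lim : MeasureTheory.Measure (WithLp 2 (ℝ × ℝ))) = ((ProbabilityTheory.gaussianReal 0 1).prod (ProbabilityTheory.gaussianReal 0 1)).map (WithLp.toLp 2) := rfl
    rw [this, MeasureTheory.integral_map (by fun_prop) (by fun_prop)]
    simp
  rw [e] at h
  refine h.congr fun n => ?_
  rw [DescClt.integral_law _ _ (by fun_prop), smul_eq_mul, div_eq_inv_mul]
  rfl
end
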